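/- arXiv:1211.1058 — 4 statements merged into one kernel-verified Lean document; each statement's English description precedes it below -/
import Mathlib

section
/- For every dimension s ≥ 1, every N ≥ 1 and every q ∈ (0,1), the probability that a random point set (z_1, …, z_N) of N i.i.d. uniform points in [0,1]^s satisfies D*_N(z_1, …, z_N) ≤ 5.7 · √(4.9 + log((1−q)^{−1})/s) · √s/√N is at least q. Equivalently, the product measure (of N copies of Lebesgue measure on [0,1]^s) of the set of N-tuples (z_1,…,z_N) ∈ ([0,1]^s)^N with D*_N(z_1,…,z_N) ≤ 5.7 · √(4.9 + log((1−q)^{−1})/s) · √s/√N is at least q. -/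
open MeasureTheory Real

/-!
The proof is a chaining argument over bracketing covers of the family of anchored boxes `[0, x]`.

*Covers.* In the coordinates `u i = -log (x i)` the volume of `[0, x]` is `exp (-∑ u i)`. Rounding
`u` down and up to the grid of mesh `η / s` changes the volume by a factor `exp (± η)`, and boxes of
volume below `η` are bracketed from below by `∅`. Only grid points with `∑ u i ≤ log (1 / η) + η`
are needed; a generating-function count shows that there are at most
`(e (2 + log (1 / η) / η)) ^ s` of them. With `η = 16⁻ᵏ` this gives a cover of cardinality at most
`exp (6 k s)` (`exists_cover`), without any factor `log s` in the exponent.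

*Deviation.* For sets `A`, `B` whose symmetric difference has measure at most `p`, the function
`1_B - 1_A` is bounded by `1` and has second moment at most `p`, and `exp u ≤ 1 + u + u ^ 2` for
`|u| ≤ 1` gives a Bernstein-type bound with exponent `y ^ 2 / (4 p N)` (`chernoff`, `level_tail`).

*Chaining.* Put `ε = √(4.9 + log (1 / (1 - q)) / s) * √s / √N`. If `5.7 ε ≥ 1` the claim is trivial.
Otherwise choose `K` with `16⁻⁽ᴷ⁺¹⁾ < ε ≤ 16⁻ᴷ`. Each box `[0, x]` is approximated by its lower
brackets at levels `0, …, K + 1` and by its upper bracket at level `K + 1`. Consecutive sets differ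
by measure at most `1.2 * 16⁻ʲ`, and a union bound over all such pairs of cover elements shows that,
outside an event of probability at most `1 - q`, the increment at level `j` is at most
`2 (1.37 + 0.87 j) 4⁻ʲ ε N` for every `j ≤ K` (`bad_event_bound`). These increments add up to at
most `4.44 ε N`, and the last bracket contributes at most `1.1 ε N`.
-/

/-- The star-discrepancy of the point set `z 0, …, z (N-1)` in `[0,1]^s`. -/
noncomputable def starDiscrepancy (s N : ℕ) (z : Fin N → (Fin s → ℝ)) : ℝ :=
  ⨆ x : (Set.Icc (0 : Fin s → ℝ) 1),
    |(Nat.card {n : Fin N // z n ∈ Set.Icc 0 (x : Fin s → ℝ)} : ℝ) / N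
      - ∏ i, (x : Fin s → ℝ) i|

/-! ### Exponential tail bound -/

/-- Bernstein-type upper tail for a sum of i.i.d. bounded variables `f (z n)` with second moment
at most `p`: the exponential moment of order `t` is controlled by `exp u ≤ 1 + u + u ^ 2`, valid
for `|u| ≤ 1`; this is why `t ≤ 1` is needed. -/
theorem chernoff {X : Type*} [MeasurableSpace X] (ν : Measure X) [IsProbabilityMeasure ν]
    (N : ℕ) (f : X → ℝ) (hf : Measurable f) (hb : ∀ x, |f x| ≤ 1) (p : ℝ)
    (hp : ∫ x, f x ^ 2 ∂ν ≤ p) (t : ℝ) (ht0 : 0 ≤ t) (ht1 : t ≤ 1) (y : ℝ) :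
    (Measure.pi fun _ : Fin N => ν).real {z | y ≤ ∑ n, f (z n) - N * ∫ x, f x ∂ν}
      ≤ exp (-(t * y) + t ^ 2 * p * N) := by
  set m := ∫ x, f x ∂ν with hm
  have hfi : Integrable f ν :=
    Integrable.of_bound hf.aestronglyMeasurable 1 (.of_forall fun x => by simpa using hb x)
  have hf2 : Integrable (fun x => f x ^ 2) ν := by
    refine Integrable.of_bound (hf.pow_const 2).aestronglyMeasurable 1 (.of_forall fun x => ?_)
    simpa using hb x
  have hei : Integrable (fun x => exp (t * f x)) ν := by
    refine Integrable.of_bound (by fun_prop) (exp 1) (.of_forall fun x => ?_)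
    rw [Real.norm_eq_abs, abs_exp, exp_le_exp]
    have := (abs_le.mp (hb x)).2
    nlinarith
  have h1 : ∫ x, exp (t * f x) ∂ν ≤ exp (t * m + t ^ 2 * p) := by
    calc ∫ x, exp (t * f x) ∂ν ≤ ∫ x, (1 + t * f x + t ^ 2 * f x ^ 2) ∂ν := by
          refine integral_mono hei (((integrable_const _).add (hfi.const_mul t)).add
            (hf2.const_mul _)) fun x => ?_
          have hx : |t * f x| ≤ 1 := by
            rw [abs_mul, abs_of_nonneg ht0]
            nlinarith [hb x, abs_nonneg (f x)]
          have := (abs_le.mp (Real.abs_exp_sub_one_sub_id_le hx)).2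
          simp only
          nlinarith
      _ = 1 + t * m + t ^ 2 * ∫ x, f x ^ 2 ∂ν := by
          rw [integral_add (f := fun x => 1 + t * f x)
            ((integrable_const _).add (hfi.const_mul t)) (hf2.const_mul _),
            integral_add (integrable_const _) (hfi.const_mul t), integral_const_mul,
            integral_const_mul]
          simp [hm]
      _ ≤ (t * m + t ^ 2 * p) + 1 := by nlinarith [mul_le_mul_of_nonneg_left hp (sq_nonneg t)]
      _ ≤ _ := add_one_le_exp _
  have hmgf : ProbabilityTheory.mgf (fun z : Fin N → X => ∑ n, f (z n))
      (Measure.pi fun _ : Fin N => ν) t = (∫ x, exp (t * f x) ∂ν) ^ N := by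
    have := integral_fintype_prod_eq_pow (ι := Fin N) (μ := ν) (fun x => exp (t * f x))
    rw [Fintype.card_fin] at this
    rw [← this]
    simp only [ProbabilityTheory.mgf, Finset.mul_sum, exp_sum]
  have hint : Integrable (fun z : Fin N → X => exp (t * ∑ n, f (z n)))
      (Measure.pi fun _ : Fin N => ν) := by
    simp only [Finset.mul_sum, exp_sum]
    exact Integrable.fintype_prod (f := fun _ x => exp (t * f x)) fun _ => hei
  have := ProbabilityTheory.measure_ge_le_exp_mul_mgf (y + N * m) ht0 hint
  rw [hmgf] at this
  have hset : {z : Fin N → X | y ≤ ∑ n, f (z n) - N * m}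
      = {z | y + N * m ≤ ∑ n, f (z n)} := by
    ext z; simp only [Set.mem_ofPred_eq]; constructor <;> intro h <;> linarith
  rw [hset]
  refine this.trans ?_
  calc _ ≤ exp (-t * (y + N * m)) * exp (t * m + t ^ 2 * p) ^ N := by
        gcongr
    _ = _ := by
        rw [← exp_nat_mul, ← exp_add]; congr 1; ring

/-! ### Bracketing covers of anchored boxes -/

/-- Number of lattice points in a simplex. Each such point `k` satisfies
`1 ≤ exp s * ∏ θ ^ k i` with `θ = exp (-1 / R)`, and the sum of the right-hand sides over all of
`ℕ ^ s` is `(exp 1 / (1 - θ)) ^ s`. The bound `M` on the coordinates only makes the set finite. -/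
theorem card_simplex (s : ℕ) (R : ℝ) (hR : 0 < R) (M : ℕ) :
    (((Fintype.piFinset fun _ : Fin s => Finset.range (M + 1)).filter
      fun k => ((∑ i, k i : ℕ) : ℝ) ≤ s * R).card : ℝ) ≤ (exp 1 * (1 + R)) ^ s := by
  set S := (Fintype.piFinset fun _ : Fin s => Finset.range (M + 1)) with hS
  have hpos : 0 < 1 / R := by positivity
  set θ := exp (-(1 / R)) with hθ
  have hθ1 : θ < 1 := by rw [hθ, exp_lt_one_iff]; linarith
  have hgeo : ∑ k ∈ Finset.range (M + 1), θ ^ k ≤ 1 + R := by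
    have h1 : ∑ k ∈ Finset.range (M + 1), θ ^ k ≤ (1 - θ)⁻¹ :=
      (summable_geometric_of_lt_one (exp_pos _).le hθ1).sum_le_tsum _
        (fun i _ => by positivity) |>.trans_eq (tsum_geometric_of_lt_one (exp_pos _).le hθ1)
    refine h1.trans ?_
    have h2 : θ ≤ R / (1 + R) := by
      rw [hθ, exp_neg, inv_le_comm₀ (exp_pos _) (by positivity), inv_div]
      have := add_one_le_exp (1 / R)
      rwa [add_div, div_self hR.ne']
    rw [inv_le_comm₀ (by linarith) (by positivity)]
    have : R / (1 + R) = 1 - (1 + R)⁻¹ := by field_simp; ring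
    linarith
  calc ((S.filter fun k => ((∑ i, k i : ℕ) : ℝ) ≤ s * R).card : ℝ)
      = ∑ k ∈ S.filter fun k => ((∑ i, k i : ℕ) : ℝ) ≤ s * R, (1 : ℝ) := by simp
    _ ≤ ∑ k ∈ S.filter fun k => ((∑ i, k i : ℕ) : ℝ) ≤ s * R, exp s * ∏ i, θ ^ k i := by
        refine Finset.sum_le_sum fun k hk => ?_
        rw [Finset.prod_pow_eq_pow_sum, hθ, ← exp_nat_mul, ← exp_add, one_le_exp_iff]
        have := (Finset.mem_filter.mp hk).2
        have h3 : ((∑ i, k i : ℕ) : ℝ) * (1 / R) ≤ s * R * (1 / R) := by gcongr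
        rw [mul_assoc, mul_one_div_cancel hR.ne'] at h3
        linarith
    _ ≤ ∑ k ∈ S, exp s * ∏ i, θ ^ k i :=
        Finset.sum_le_sum_of_subset_of_nonneg (Finset.filter_subset _ _)
          fun i _ _ => by positivity
    _ = exp s * (∑ k ∈ Finset.range (M + 1), θ ^ k) ^ s := by
        rw [← Finset.mul_sum, hS, Finset.sum_prod_piFinset]
        simp
    _ ≤ exp s * (1 + R) ^ s := by
        gcongr
    _ = _ := by rw [mul_pow, ← exp_nat_mul, mul_one]

/-- The uniform distribution on `[0,1]^s`. -/
noncomputable abbrev cubeMeasure (s : ℕ) : Measure (Fin s → ℝ) :=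
  Measure.pi fun _ : Fin s => volume.restrict (Set.Icc (0 : ℝ) 1)

instance cubeMeasure_isProbability (s : ℕ) : IsProbabilityMeasure (cubeMeasure s) := by
  have : IsProbabilityMeasure (volume.restrict (Set.Icc (0 : ℝ) 1)) := ⟨by simp⟩
  infer_instance

theorem cubeMeasure_box {s : ℕ} {x : Fin s → ℝ} (hx : x ∈ Set.Icc (0 : Fin s → ℝ) 1) :
    (cubeMeasure s).real (Set.Icc 0 x) = ∏ i, x i := by
  rw [Measure.real, ← Set.pi_univ_Icc, Measure.pi_pi, ENNReal.toReal_prod]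
  refine Finset.prod_congr rfl fun i _ => ?_
  have h0 : 0 ≤ x i := hx.1 i
  have h1 : x i ≤ 1 := hx.2 i
  rw [Measure.restrict_apply measurableSet_Icc, Set.inter_eq_left.mpr]
  · simp [h0]
  · exact Set.Icc_subset_Icc le_rfl h1

theorem gridPoint_mem {s : ℕ} {h : ℝ} (hh : 0 ≤ h) (k : Fin s → ℕ) :
    (fun i => exp (-(h * k i))) ∈ Set.Icc (0 : Fin s → ℝ) 1 := by
  refine ⟨fun i => (exp_pos _).le, fun i => ?_⟩
  simp only [Pi.one_apply, exp_le_one_iff]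
  have : 0 ≤ h * k i := by positivity
  linarith

theorem gridBox_measure {s : ℕ} {h : ℝ} (hh : 0 ≤ h) (k : Fin s → ℕ) :
    (cubeMeasure s).real (Set.Icc 0 fun i => exp (-(h * k i)))
      = exp (-(h * (∑ i, k i : ℕ))) := by
  rw [cubeMeasure_box (gridPoint_mem hh k), ← exp_sum]
  simp [Finset.mul_sum]

/-- The grid cell containing `x` in logarithmic coordinates, mesh `η / s`: the grid points with
exponents `k` and `k + 1` bracket `x`, and a volume at least `η` bounds the sum of the `k i`. -/
theorem exists_grid_index {s : ℕ} (hs : 1 ≤ s) {η : ℝ} (hη : 0 < η) {x : Fin s → ℝ}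
    (hx : x ∈ Set.Icc (0 : Fin s → ℝ) 1) (hv : η ≤ ∏ i, x i) :
    ∃ k : Fin s → ℕ, ((∑ i, k i : ℕ) : ℝ) ≤ s * (log (1 / η) / η) ∧
      (∀ i, x i ≤ exp (-(η / s * k i))) ∧ ∀ i, exp (-(η / s * (k i + 1 : ℕ))) ≤ x i := by
  have hs' : (0 : ℝ) < s := by exact_mod_cast hs
  have hh : 0 < η / s := by positivity
  have hpos : ∀ i, 0 < x i := by
    intro i
    refine lt_of_le_of_ne (hx.1 i) fun h0 => ?_
    rw [Finset.prod_eq_zero (Finset.mem_univ i) h0.symm] at hv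
    linarith
  have hlog : ∀ i, 0 ≤ -log (x i) / (η / s) := fun i =>
    div_nonneg (neg_nonneg.mpr (log_nonpos (hpos i).le (hx.2 i))) hh.le
  refine ⟨fun i => ⌊-log (x i) / (η / s)⌋₊, ?_, fun i => ?_, fun i => ?_⟩
  · push_cast
    calc ∑ i, (⌊-log (x i) / (η / s)⌋₊ : ℝ) ≤ ∑ i, -log (x i) / (η / s) :=
          Finset.sum_le_sum fun i _ => Nat.floor_le (hlog i)
      _ = -log (∏ i, x i) / (η / s) := by
          rw [← Finset.sum_div, Finset.sum_neg_distrib, log_prod fun i _ => (hpos i).ne']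
      _ ≤ log (1 / η) / (η / s) := by
          gcongr
          rw [one_div, log_inv]
          exact neg_le_neg (log_le_log hη hv)
      _ = _ := by field_simp
  · have := (le_div_iff₀ hh).mp (Nat.floor_le (hlog i))
    rw [← log_le_iff_le_exp (hpos i)]
    linarith
  · have := (div_lt_iff₀ hh).mp (Nat.lt_floor_add_one (-log (x i) / (η / s)))
    rw [← le_log_iff_exp_le (hpos i)]
    push_cast
    linarith

/-- A box of volume below `η` can be enlarged within the unit cube to one of volume exactly `η`,
by moving its corner along the segment to `(1, …, 1)`. -/
theorem exists_enlarge {s : ℕ} {η : ℝ} (hη1 : η ≤ 1) {x : Fin s → ℝ}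
    (hx : x ∈ Set.Icc (0 : Fin s → ℝ) 1) (hv : ∏ i, x i ≤ η) :
    ∃ y ∈ Set.Icc (0 : Fin s → ℝ) 1, x ≤ y ∧ ∏ i, y i = η := by
  let g : ℝ → ℝ := fun t => ∏ i, (x i + t * (1 - x i))
  have hg : ContinuousOn g (Set.Icc 0 1) := by fun_prop
  obtain ⟨t, ht, hgt⟩ := intermediate_value_Icc zero_le_one hg
    (show η ∈ Set.Icc (g 0) (g 1) by constructor <;> simp [g, hv, hη1])
  refine ⟨fun i => x i + t * (1 - x i), ⟨fun i => ?_, fun i => ?_⟩, fun i => ?_, hgt⟩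
  all_goals
    have h0 : 0 ≤ x i := hx.1 i
    have h1 : x i ≤ 1 := hx.2 i
    have := ht.1
    have := ht.2
    simp only [Pi.zero_apply, Pi.one_apply]
    nlinarith

/-- Bracketing cover of the anchored boxes at scale `η`, made of `∅` and the grid boxes with
`∑ k i ≤ s (log (1 / η) / η + 1)`. The constant `1.1` absorbs the factor `exp η` that occurs for
boxes of volume below `η`, whose lower bracket is `∅`. -/
theorem exists_cover_aux {s : ℕ} (hs : 1 ≤ s) {η : ℝ} (hη : 0 < η) (hη1 : η ≤ 1 / 16) :
    ∃ F : Finset (Set (Fin s → ℝ)),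
      (F.card : ℝ) ≤ (exp 1 * (2 + log (1 / η) / η) + 1) ^ s ∧
      (∀ A ∈ F, MeasurableSet A) ∧
      ∀ x ∈ Set.Icc (0 : Fin s → ℝ) 1, ∃ A ∈ F, ∃ B ∈ F, A ⊆ Set.Icc 0 x ∧ Set.Icc 0 x ⊆ B ∧
        (cubeMeasure s).real B - (cubeMeasure s).real A ≤ 1.1 * η := by
  classical
  have hs' : (0 : ℝ) < s := by exact_mod_cast hs
  have hh : 0 < η / s := by positivity
  have hlog : 0 ≤ log (1 / η) := log_nonneg (by rw [le_div_iff₀ hη]; linarith)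
  set R : ℝ := log (1 / η) / η + 1 with hR
  have hR0 : 0 < R := by positivity
  let box : (Fin s → ℕ) → Set (Fin s → ℝ) := fun k => Set.Icc 0 fun i => exp (-(η / s * k i))
  let K := ((Fintype.piFinset fun _ : Fin s => Finset.range (⌊s * R⌋₊ + 1)).filter
      fun k => ((∑ i, k i : ℕ) : ℝ) ≤ s * R)
  have hK : ∀ k : Fin s → ℕ, ((∑ i, k i : ℕ) : ℝ) ≤ s * R → box k ∈ insert ∅ (K.image box) := by
    intro k hk
    refine Finset.mem_insert_of_mem (Finset.mem_image_of_mem _ (Finset.mem_filter.mpr ⟨?_, hk⟩))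
    refine Fintype.mem_piFinset.mpr fun i => Finset.mem_range_succ_iff.mpr (Nat.le_floor ?_)
    refine le_trans ?_ hk
    exact_mod_cast Finset.single_le_sum (f := k) (fun _ _ => Nat.zero_le _) (Finset.mem_univ i)
  have hKle : ∀ k : Fin s → ℕ, ((∑ i, k i : ℕ) : ℝ) ≤ s * (log (1 / η) / η) →
      ((∑ i, k i : ℕ) : ℝ) ≤ s * R := fun k hk => by rw [hR]; nlinarith
  have hsum : ∀ k : Fin s → ℕ, ((∑ i, (k i + 1) : ℕ) : ℝ) = (∑ i, k i : ℕ) + s := by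
    intro k; simp [Finset.sum_add_distrib]
  -- passing from the index `k` to `k + 1` multiplies the volume by `exp (-η)`
  have hstep : ∀ k : Fin s → ℕ, (cubeMeasure s).real (box fun i => k i + 1)
      = (cubeMeasure s).real (box k) * exp (-η) := by
    intro k
    simp only [box]
    rw [gridBox_measure hh.le, gridBox_measure hh.le, ← exp_add, hsum]
    congr 1
    field_simp
    ring
  have hexp : 1 - η ≤ exp (-η) := by linarith [add_one_le_exp (-η)]
  have hmono : ∀ {A B : Set (Fin s → ℝ)}, A ⊆ B → (cubeMeasure s).real A ≤ (cubeMeasure s).real B :=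
    fun h => measureReal_mono h
  refine ⟨insert ∅ (K.image box), ?_, ?_, ?_⟩
  · have h1 : ((insert ∅ (K.image box)).card : ℝ) ≤ K.card + 1 := by
      exact_mod_cast (Finset.card_insert_le _ _).trans
        (Nat.add_le_add_right Finset.card_image_le 1)
    have h2 := card_simplex s R hR0 ⌊s * R⌋₊
    have h3 : (exp 1 * (1 + R)) ^ s + 1 ≤ (exp 1 * (1 + R) + 1) ^ s := by
      simpa using pow_add_pow_le (x := exp 1 * (1 + R)) (y := 1) (by positivity) zero_le_one
        (by omega : s ≠ 0)
    have h4 : 1 + R = 2 + log (1 / η) / η := by rw [hR]; ring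
    rw [← h4]
    linarith
  · intro A hA
    rcases Finset.mem_insert.mp hA with rfl | hA
    · exact MeasurableSet.empty
    · obtain ⟨k, -, rfl⟩ := Finset.mem_image.mp hA
      exact measurableSet_Icc
  · intro x hx
    rcases le_total η (∏ i, x i) with hv | hv
    · obtain ⟨k, hk, hup, hlo⟩ := exists_grid_index hs hη hx hv
      refine ⟨_, hK (fun i => k i + 1) ?_, _, hK k (hKle k hk), Set.Icc_subset_Icc_right hlo,
        Set.Icc_subset_Icc_right hup, ?_⟩
      · rw [hsum, hR]; linarith
      · rw [hstep]
        have h1 : (cubeMeasure s).real (box k) ≤ 1 := measureReal_le_one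
        have h0 : 0 ≤ (cubeMeasure s).real (box k) := measureReal_nonneg
        nlinarith
    · obtain ⟨y, hy, hxy, hyη⟩ := exists_enlarge (by linarith) hx hv
      obtain ⟨k, hk, hup, hlo⟩ := exists_grid_index hs hη hy hyη.ge
      refine ⟨∅, Finset.mem_insert_self _ _, _, hK k (hKle k hk), Set.empty_subset _,
        Set.Icc_subset_Icc_right (hxy.trans hup), ?_⟩
      have h1 : (cubeMeasure s).real (box fun i => k i + 1) ≤ η := by
        rw [← hyη, ← cubeMeasure_box hy]
        exact hmono (Set.Icc_subset_Icc_right hlo)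
      rw [hstep] at h1
      have h0 : 0 ≤ (cubeMeasure s).real (box k) := measureReal_nonneg
      simp only [measureReal_empty, sub_zero]
      norm_num
      nlinarith

/-- `exists_cover_aux` at scale `16⁻ᵏ`; the base of the cardinality bound is below
`400 ^ k ≤ exp (6 k)`. -/
theorem exists_cover {s : ℕ} (hs : 1 ≤ s) {k : ℕ} (hk : 1 ≤ k) :
    ∃ F : Finset (Set (Fin s → ℝ)),
      (F.card : ℝ) ≤ exp (6 * k * s) ∧
      (∀ A ∈ F, MeasurableSet A) ∧
      ∀ x ∈ Set.Icc (0 : Fin s → ℝ) 1, ∃ A ∈ F, ∃ B ∈ F, A ⊆ Set.Icc 0 x ∧ Set.Icc 0 x ⊆ B ∧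
        (cubeMeasure s).real B - (cubeMeasure s).real A ≤ 1.1 * (1 / 16 : ℝ) ^ k := by
  obtain ⟨F, hc, hF⟩ := exists_cover_aux hs (η := (1 / 16 : ℝ) ^ k) (by positivity)
    (pow_le_of_le_one (by norm_num) (by norm_num) (by omega))
  refine ⟨F, hc.trans ?_, hF⟩
  have hexp : exp (6 * k * s) = (exp 6 ^ k) ^ s := by
    rw [← exp_nat_mul, ← exp_nat_mul]; congr 1; ring
  rw [hexp]
  have he1 : exp 1 < 2.72 := exp_one_lt_d9.trans (by norm_num)
  have he6 : (400 : ℝ) ≤ exp 6 := by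
    have : exp 6 = exp 1 ^ 6 := by rw [← exp_nat_mul]; norm_num
    rw [this]
    calc (400 : ℝ) ≤ 2.718 ^ 6 := by norm_num
      _ ≤ _ := by gcongr; exact (by norm_num : (2.718 : ℝ) ≤ _).trans exp_one_gt_d9.le
  have hlog : log (1 / (1 / 16 : ℝ) ^ k) / (1 / 16 : ℝ) ^ k = k * log 16 * 16 ^ k := by
    simp [log_pow]
  have hlog16 : log 16 ≤ 2.8 := by
    have : (16 : ℝ) = 2 ^ 4 := by norm_num
    rw [this, log_pow]
    have := log_two_lt_d9
    norm_num at this ⊢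
    linarith
  have hlog0 : 0 ≤ log 16 := log_nonneg (by norm_num)
  have hk2 : (k : ℝ) ≤ 2 ^ k := by exact_mod_cast k.lt_two_pow_self.le
  have h12 : (12.5 : ℝ) ≤ 12.5 ^ k := le_self_pow₀ (by norm_num) (by omega)
  have h32 : (32 : ℝ) ≤ 32 ^ k := le_self_pow₀ (by norm_num) (by omega)
  have hbig : (k : ℝ) * log 16 * 16 ^ k ≤ 2.8 * 32 ^ k := by
    calc (k : ℝ) * log 16 * 16 ^ k ≤ 2 ^ k * 2.8 * 16 ^ k := by gcongr
      _ = 2.8 * (2 * 16) ^ k := by rw [mul_pow]; ring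
      _ = _ := by norm_num
  have hnn : 0 ≤ (k : ℝ) * log 16 * 16 ^ k := by positivity
  rw [hlog]
  refine pow_le_pow_left₀ (by positivity) ?_ s
  calc exp 1 * (2 + k * log 16 * 16 ^ k) + 1 ≤ 2.72 * (2 + 2.8 * 32 ^ k) + 1 := by gcongr
    _ ≤ 12.5 * 32 ^ k := by norm_num; linarith
    _ ≤ 12.5 ^ k * 32 ^ k := by gcongr
    _ = 400 ^ k := by rw [← mul_pow]; norm_num
    _ ≤ _ := by gcongr

/-! ### Increments of the deviation -/

/-- The deviation `#{n | z n ∈ A} - N ν(A)`. -/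
noncomputable def dev {X : Type*} [MeasurableSpace X] (ν : Measure X) {N : ℕ} (z : Fin N → X)
    (A : Set X) : ℝ :=
  ∑ n, A.indicator (1 : X → ℝ) (z n) - N * ν.real A

/-- `chernoff` applied to the difference of the indicators of `B` and `A`. -/
theorem dev_increment_tail {X : Type*} [MeasurableSpace X] (ν : Measure X)
    [IsProbabilityMeasure ν] (N : ℕ) {A B : Set X} (hA : MeasurableSet A) (hB : MeasurableSet B)
    {p : ℝ} (hp : ν.real (symmDiff A B) ≤ p) {t : ℝ} (ht0 : 0 ≤ t) (ht1 : t ≤ 1) (y : ℝ) :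
    (Measure.pi fun _ : Fin N => ν).real {z | y ≤ dev ν z B - dev ν z A}
      ≤ exp (-(t * y) + t ^ 2 * p * N) := by
  set f : X → ℝ := fun x => B.indicator (1 : X → ℝ) x - A.indicator (1 : X → ℝ) x with hf
  have hm : Measurable f := by
    exact (measurable_one.indicator hB).sub (measurable_one.indicator hA)
  have hsq : ∀ x, f x ^ 2 = (symmDiff A B).indicator (1 : X → ℝ) x := by
    intro x
    by_cases h1 : x ∈ A <;> by_cases h2 : x ∈ B <;> simp [hf, h1, h2, Set.mem_symmDiff]
  have hb : ∀ x, |f x| ≤ 1 := by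
    intro x
    rw [← sq_le_one_iff_abs_le_one, hsq]
    exact Set.indicator_le_self' (fun _ _ => zero_le_one) x
  have hint : ∫ x, f x ∂ν = ν.real B - ν.real A := by
    rw [hf, integral_sub ((integrable_const 1).indicator hB) ((integrable_const 1).indicator hA),
      integral_indicator_one hB, integral_indicator_one hA]
  have h2 : ∫ x, f x ^ 2 ∂ν ≤ p := by
    simp only [hsq]
    rwa [integral_indicator_one (hA.symmDiff hB)]
  have := chernoff ν N f hm hb p h2 t ht0 ht1 y
  rw [hint] at this
  convert this using 5 with z
  simp only [dev, hf, Finset.sum_sub_distrib]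
  ring

/-- The coefficient of the increment allowed at level `j`, which is
`2 (1.37 + 0.87 j) 4⁻ʲ ε N`. It is chosen so that its square is at least
`1.2 (1.55 + 2.6 j)`, which beats the entropy of the pairs of cover elements at level `j`. -/
noncomputable def levelCoeff (j : ℕ) : ℝ := 1.37 + 0.87 * j

/-- Two-sided tail of a level-`j` increment, from `dev_increment_tail` with the optimal
`t = y / (2 p N)`; the last hypothesis says that this `t` is at most `1`. -/
theorem level_tail {X : Type*} [MeasurableSpace X] (ν : Measure X)
    [IsProbabilityMeasure ν] (N : ℕ) {A B : Set X} (hA : MeasurableSet A) (hB : MeasurableSet B)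
    (j : ℕ) (hp : ν.real (symmDiff A B) ≤ 1.2 * (1 / 16) ^ j) {ε : ℝ} (hε : 0 ≤ ε)
    (ht : levelCoeff j * 4 ^ j * ε ≤ 1.2) :
    (Measure.pi fun _ : Fin N => ν).real
        {z | 2 * levelCoeff j * (1 / 4) ^ j * ε * N ≤ |dev ν z B - dev ν z A|}
      ≤ 2 * exp (-((1.55 + 2.6 * j) * (ε ^ 2 * N))) := by
  have hb : 0 ≤ levelCoeff j := by unfold levelCoeff; positivity
  set b := levelCoeff j with hbdef
  set t := b * 4 ^ j * ε / 1.2 with htdef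
  set y := 2 * b * (1 / 4) ^ j * ε * N with hy
  have ht0 : 0 ≤ t := by positivity
  have ht1 : t ≤ 1 := by rw [htdef, div_le_one (by norm_num)]; exact ht
  have hexp : exp (-(t * y) + t ^ 2 * (1.2 * (1 / 16) ^ j) * N)
      ≤ exp (-((1.55 + 2.6 * j) * (ε ^ 2 * N))) := by
    have h4 : (4 : ℝ) ^ j * (1 / 4) ^ j = 1 := by rw [← mul_pow]; norm_num
    have h16 : ((4 : ℝ) ^ j) ^ 2 * (1 / 16) ^ j = 1 := by
      rw [← pow_mul, mul_comm j 2, pow_mul, ← mul_pow]; norm_num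
    have e1 : t * y = 2 * (b ^ 2 / 1.2) * (ε ^ 2 * N) := by
      calc t * y = 2 * (b ^ 2 / 1.2) * (ε ^ 2 * N) * ((4 : ℝ) ^ j * (1 / 4) ^ j) := by
            rw [htdef, hy]; ring
        _ = _ := by rw [h4, mul_one]
    have e2 : t ^ 2 * (1.2 * (1 / 16) ^ j) * N = (b ^ 2 / 1.2) * (ε ^ 2 * N) := by
      calc t ^ 2 * (1.2 * (1 / 16) ^ j) * N
          = (b ^ 2 / 1.2) * (ε ^ 2 * N) * (((4 : ℝ) ^ j) ^ 2 * (1 / 16) ^ j) := by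
            rw [htdef]; ring
        _ = _ := by rw [h16, mul_one]
    have hjj : (j : ℝ) ≤ (j : ℝ) ^ 2 := by exact_mod_cast Nat.le_self_pow two_ne_zero j
    have e3 : 1.55 + 2.6 * (j : ℝ) ≤ b ^ 2 / 1.2 := by
      rw [hbdef, levelCoeff, le_div_iff₀ (by norm_num)]
      norm_num
      nlinarith
    have e4 : 0 ≤ ε ^ 2 * N := by positivity
    rw [e1, e2, exp_le_exp]
    nlinarith [mul_le_mul_of_nonneg_right e3 e4]
  have hu := (dev_increment_tail ν N hA hB hp ht0 ht1 y).trans hexp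
  have hl := (dev_increment_tail ν N hB hA (by rwa [symmDiff_comm]) ht0 ht1 y).trans hexp
  have hsub : {z : Fin N → X | y ≤ |dev ν z B - dev ν z A|}
      ⊆ {z | y ≤ dev ν z B - dev ν z A} ∪ {z | y ≤ dev ν z A - dev ν z B} := by
    intro z hz
    rcases le_abs.mp (show y ≤ |dev ν z B - dev ν z A| from hz) with h | h
    · exact Or.inl h
    · exact Or.inr (show y ≤ _ by linarith)
  calc _ ≤ _ := measureReal_mono hsub
    _ ≤ _ := measureReal_union_le _ _
    _ ≤ _ := by linarith

theorem sum_level (K : ℕ) : ∑ j ∈ Finset.range K, 2 * levelCoeff j * (1 / 4 : ℝ) ^ j ≤ 4.44 := by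
  -- the subtracted term bounds the tail of the series from `K` on
  have h : ∀ K : ℕ, ∑ j ∈ Finset.range K, 2 * levelCoeff j * (1 / 4 : ℝ) ^ j
      ≤ 4.44 - (4.44 + 2.32 * K) * (1 / 4 : ℝ) ^ K := by
    intro K
    induction K with
    | zero => simp
    | succ K ih =>
      rw [Finset.sum_range_succ, pow_succ]
      have : 0 < (1 / 4 : ℝ) ^ K := by positivity
      unfold levelCoeff at *
      push_cast
      have hK : (0 : ℝ) ≤ K := by positivity
      have key : 2 * (1.37 + 0.87 * (K : ℝ)) + (4.44 + 2.32 * (K + 1)) * (1 / 4)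
          ≤ 4.44 + 2.32 * K := by norm_num; linarith
      have := mul_le_mul_of_nonneg_right key this.le
      linarith
  have h2 := h K
  have : 0 ≤ (4.44 + 2.32 * (K : ℝ)) * (1 / 4 : ℝ) ^ K := by positivity
  linarith

theorem sum_prob (s K : ℕ) (hs : 1 ≤ s) :
    ∑ j ∈ Finset.range K, 2 * exp (-(s * (1.595 + 0.74 * j))) ≤ 1 := by
  have hs' : (1 : ℝ) ≤ s := by exact_mod_cast hs
  have hlog : log 2 ≤ 0.694 := by have := log_two_lt_d9; norm_num at this ⊢; linarith
  have h : ∀ j ∈ Finset.range K, 2 * exp (-(s * (1.595 + 0.74 * j))) ≤ (1 / 2) * (1 / 2 : ℝ) ^ j := by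
    intro j _
    have e : (1 / 2) * (1 / 2 : ℝ) ^ j = 2 * exp (-((j + 2 : ℕ) * log 2)) := by
      rw [exp_neg, exp_nat_mul, exp_log two_pos, pow_add, one_div, inv_pow]
      field_simp
    rw [e]
    refine mul_le_mul_of_nonneg_left (exp_le_exp.mpr (neg_le_neg ?_)) zero_le_two
    push_cast
    have hj : (0 : ℝ) ≤ j := by positivity
    have h1 : ((j : ℝ) + 2) * log 2 ≤ (j + 2) * 0.694 := by gcongr
    have h2 : 1 * (1.595 + 0.74 * (j : ℝ)) ≤ s * (1.595 + 0.74 * j) := by gcongr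
    norm_num at h1 h2 ⊢
    linarith
  calc _ ≤ ∑ j ∈ Finset.range K, (1 / 2) * (1 / 2 : ℝ) ^ j := Finset.sum_le_sum h
    _ = 1 - (1 / 2) ^ K := by
        rw [← Finset.mul_sum, geom_sum_eq (by norm_num)]; ring
    _ ≤ 1 := by have : 0 < (1 / 2 : ℝ) ^ K := by positivity
                linarith

/-! ### Chaining -/

/-- Deterministic part of the chaining. If all increments between nearby cover elements of
consecutive levels are controlled, so is the deviation of every anchored box: the lower brackets at
levels `0, …, K + 1` bound it from below, and the last lower bracket at level `K` followed by the
upper bracket at level `K + 1` bounds it from above. -/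
theorem dev_le_of_chain {s N : ℕ} (F : ℕ → Finset (Set (Fin s → ℝ)))
    (hF0 : F 0 = {∅})
    (hF : ∀ k, 1 ≤ k → ∀ x ∈ Set.Icc (0 : Fin s → ℝ) 1, ∃ A ∈ F k, ∃ B ∈ F k,
      A ⊆ Set.Icc 0 x ∧ Set.Icc 0 x ⊆ B ∧
        (cubeMeasure s).real B - (cubeMeasure s).real A ≤ 1.1 * (1 / 16 : ℝ) ^ k)
    (hmeas : ∀ k, ∀ A ∈ F k, MeasurableSet A)
    (K : ℕ) (y : ℕ → ℝ) (z : Fin N → Fin s → ℝ)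
    (hz : ∀ j < K + 1, ∀ A ∈ F j, ∀ B ∈ F (j + 1),
      (cubeMeasure s).real (symmDiff A B) ≤ 1.2 * (1 / 16) ^ j →
      |dev (cubeMeasure s) z B - dev (cubeMeasure s) z A| ≤ y j)
    (x : Fin s → ℝ) (hx : x ∈ Set.Icc (0 : Fin s → ℝ) 1) :
    |dev (cubeMeasure s) z (Set.Icc 0 x)|
      ≤ ∑ j ∈ Finset.range (K + 1), y j + 1.1 * (1 / 16) ^ (K + 1) * N := by
  set ν := cubeMeasure s with hν
  set Q := Set.Icc 0 x with hQ
  have hQm : MeasurableSet Q := measurableSet_Icc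
  -- lower approximations at every level; level `0` is the empty set
  have hlow : ∀ k, ∃ A ∈ F k, A ⊆ Q ∧ ν.real Q - ν.real A ≤ 1.1 * (1 / 16 : ℝ) ^ k := by
    intro k
    rcases Nat.eq_zero_or_pos k with rfl | hk
    · refine ⟨∅, by simp [hF0], Set.empty_subset _, ?_⟩
      have : ν.real Q ≤ 1 := measureReal_le_one
      simp only [measureReal_empty]
      norm_num
      linarith
    · obtain ⟨A, hA, B, hB, hAQ, hQB, hAB⟩ := hF k hk x hx
      exact ⟨A, hA, hAQ, by linarith [measureReal_mono (μ := ν) hQB]⟩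
  choose A hAF hAQ hAν using hlow
  have hsplit : ∀ (j : ℕ) (B : Set (Fin s → ℝ)), ν.real (symmDiff Q B) ≤ 1.1 * (1 / 16) ^ (j + 1) →
      ν.real (symmDiff (A j) B) ≤ 1.2 * (1 / 16) ^ j := by
    intro j B hB
    have h1 : ν.real (symmDiff (A j) B) ≤ ν.real (symmDiff (A j) Q) + ν.real (symmDiff Q B) :=
      (measureReal_mono (symmDiff_triangle _ _ _)).trans (measureReal_union_le _ _)
    have h2 : ν.real (symmDiff (A j) Q) = ν.real Q - ν.real (A j) := by
      rw [symmDiff_of_le (hAQ j)]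
      exact measureReal_sdiff (hAQ j) (hmeas j _ (hAF j))
    have := hAν j
    have hpos : 0 < (1 / 16 : ℝ) ^ j := by positivity
    rw [pow_succ] at hB
    linarith
  have hlowQ : ∀ k, ν.real (symmDiff Q (A k)) ≤ 1.1 * (1 / 16) ^ k := by
    intro k
    rw [symmDiff_comm, symmDiff_of_le (hAQ k)]
    exact (measureReal_sdiff (hAQ k) (hmeas k _ (hAF k))).trans_le (hAν k)
  have hchain : ∀ k ≤ K + 1, |dev ν z (A k)| ≤ ∑ j ∈ Finset.range k, y j := by
    intro k
    induction k with
    | zero =>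
      intro _
      have : A 0 = ∅ := by simpa [hF0] using hAF 0
      simp [this, dev]
    | succ k ih =>
      intro hk
      rw [Finset.sum_range_succ]
      have h1 := ih (by omega)
      have h2 := hz k (by omega) _ (hAF k) _ (hAF (k + 1)) (hsplit k _ (hlowQ _))
      rw [abs_le] at *
      constructor <;> linarith
  obtain ⟨A', -, B, hB, hA'Q, hQB, hAB⟩ := hF (K + 1) (by omega) x hx
  have hBQ : ν.real B - ν.real Q ≤ 1.1 * (1 / 16 : ℝ) ^ (K + 1) := by
    linarith [measureReal_mono (μ := ν) hA'Q]
  have hdevB : |dev ν z B| ≤ ∑ j ∈ Finset.range (K + 1), y j := by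
    rw [Finset.sum_range_succ]
    have h1 := hchain K (by omega)
    have h2 := hz K (by omega) _ (hAF K) _ hB (hsplit K _ (by
      rw [symmDiff_of_le hQB]
      exact (measureReal_sdiff hQB hQm).trans_le hBQ))
    rw [abs_le] at *
    constructor <;> linarith
  have hdevA := hchain (K + 1) le_rfl
  have hcnt : ∀ {C D : Set (Fin s → ℝ)}, C ⊆ D →
      ∑ n, C.indicator (1 : (Fin s → ℝ) → ℝ) (z n) ≤ ∑ n, D.indicator (1 : (Fin s → ℝ) → ℝ) (z n) :=
    fun h => Finset.sum_le_sum fun n _ =>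
      Set.indicator_le_indicator_of_subset h (fun _ => zero_le_one) _
  have c1 := hcnt (hAQ (K + 1))
  have c2 := hcnt hQB
  have hN' : (0 : ℝ) ≤ N := by positivity
  have m1 := mul_le_mul_of_nonneg_right (hAν (K + 1)) hN'
  have m2 := mul_le_mul_of_nonneg_right hBQ hN'
  rw [abs_le] at *
  unfold dev at *
  constructor <;> nlinarith [hdevA.1, hdevB.2]

theorem starDiscrepancy_le {s N : ℕ} (hN : 1 ≤ N) (z : Fin N → Fin s → ℝ) {b : ℝ}
    (h : ∀ x ∈ Set.Icc (0 : Fin s → ℝ) 1, |dev (cubeMeasure s) z (Set.Icc 0 x)| ≤ b * N) :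
    starDiscrepancy s N z ≤ b := by
  have hN' : (0 : ℝ) < N := by exact_mod_cast hN
  have : Nonempty (Set.Icc (0 : Fin s → ℝ) 1) := ⟨⟨0, le_rfl, zero_le_one⟩⟩
  refine ciSup_le fun x => ?_
  have hx := h x x.2
  rw [dev, cubeMeasure_box x.2] at hx
  have hc : (Nat.card {n : Fin N // z n ∈ Set.Icc 0 (x : Fin s → ℝ)} : ℝ)
      = ∑ n, (Set.Icc 0 (x : Fin s → ℝ)).indicator (1 : (Fin s → ℝ) → ℝ) (z n) := by
    classical
    rw [Nat.card_eq_fintype_card, Fintype.card_subtype]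
    simp [Set.indicator_apply]
  rw [hc, ← mul_le_mul_iff_left₀ hN']
  refine le_trans (le_of_eq ?_) hx
  nth_rewrite 2 [← abs_of_pos hN']
  rw [← abs_mul, sub_mul, div_mul_cancel₀ _ hN'.ne', mul_comm (∏ i, _)]

theorem abs_dev_le {X : Type*} [MeasurableSpace X] (ν : Measure X) [IsProbabilityMeasure ν]
    {N : ℕ} (z : Fin N → X) (A : Set X) : |dev ν z A| ≤ N := by
  have h1 : ν.real A ≤ 1 := measureReal_le_one
  have h0 : 0 ≤ ν.real A := measureReal_nonneg
  have hN : (0 : ℝ) ≤ N := by positivity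
  have c0 : 0 ≤ ∑ n, A.indicator (1 : X → ℝ) (z n) :=
    Finset.sum_nonneg fun n _ => Set.indicator_nonneg (fun _ _ => zero_le_one) _
  have c1 : ∑ n, A.indicator (1 : X → ℝ) (z n) ≤ N := by
    calc ∑ n, A.indicator (1 : X → ℝ) (z n) ≤ ∑ _n : Fin N, (1 : ℝ) :=
          Finset.sum_le_sum fun n _ => Set.indicator_le_self' (fun _ _ => zero_le_one) _
      _ = N := by simp
  rw [dev, abs_le]
  constructor <;> nlinarith

/-- The exponential parameter used in `level_tail` is admissible at every level `j ≤ K`. -/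
theorem level_slope {K j : ℕ} (hj : j ≤ K) {ε : ℝ} (hε0 : 0 ≤ ε) (hε : ε ≤ 1 / 5.7)
    (hεK : ε ≤ (1 / 16) ^ K) : levelCoeff j * 4 ^ j * ε ≤ 1.2 := by
  rcases Nat.eq_zero_or_pos j with rfl | hj0
  · norm_num [levelCoeff] at *
    linarith
  · have h1 : ε ≤ (1 / 16) ^ j :=
      hεK.trans (pow_le_pow_of_le_one (by norm_num) (by norm_num) hj)
    have hb : levelCoeff j ≤ 1.2 * 4 ^ j := by
      have hB := one_add_mul_le_pow (a := (3 : ℝ)) (by norm_num) j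
      have hj' : (1 : ℝ) ≤ j := by exact_mod_cast hj0
      norm_num [levelCoeff] at hB ⊢
      linarith
    have hb0 : 0 ≤ levelCoeff j := by unfold levelCoeff; positivity
    calc levelCoeff j * 4 ^ j * ε ≤ 1.2 * 4 ^ j * 4 ^ j * (1 / 16) ^ j := by gcongr
      _ = 1.2 * (4 * 4 * (1 / 16)) ^ j := by rw [mul_pow, mul_pow]; ring
      _ = 1.2 := by norm_num

/-- Union bound over all levels and all pairs of nearby cover elements: the entropy
`6 s (2 j + 1)` is absorbed by the Gaussian exponent `(1.55 + 2.6 j) (4.9 s + L)`, which leaves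
`exp (-L)` times a geometric series of sum at most `1`. -/
theorem bad_event_bound {s N : ℕ} (hs : 1 ≤ s) (F : ℕ → Finset (Set (Fin s → ℝ)))
    (hcard : ∀ k, ((F k).card : ℝ) ≤ exp (6 * k * s))
    (hmeas : ∀ k, ∀ A ∈ F k, MeasurableSet A) {ε L : ℝ} (hL : 0 ≤ L) (hε0 : 0 ≤ ε)
    (hε2 : ε ^ 2 * N = 4.9 * s + L) {K : ℕ} (hε : ε ≤ 1 / 5.7) (hεK : ε ≤ (1 / 16) ^ K) :
    (Measure.pi fun _ : Fin N => cubeMeasure s).real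
      {z | ∃ j < K + 1, ∃ A ∈ F j, ∃ B ∈ F (j + 1),
        (cubeMeasure s).real (symmDiff A B) ≤ 1.2 * (1 / 16) ^ j ∧
        2 * levelCoeff j * (1 / 4) ^ j * ε * N
          ≤ |dev (cubeMeasure s) z B - dev (cubeMeasure s) z A|} ≤ exp (-L) := by
  classical
  set P := Measure.pi fun _ : Fin N => cubeMeasure s with hP
  let E : ℕ → Set (Fin s → ℝ) × Set (Fin s → ℝ) → Set (Fin N → Fin s → ℝ) := fun j AB =>
    {z | 2 * levelCoeff j * (1 / 4) ^ j * ε * N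
          ≤ |dev (cubeMeasure s) z AB.2 - dev (cubeMeasure s) z AB.1|}
  let T : ℕ → Finset (Set (Fin s → ℝ) × Set (Fin s → ℝ)) := fun j =>
    (F j ×ˢ F (j + 1)).filter fun AB =>
      (cubeMeasure s).real (symmDiff AB.1 AB.2) ≤ 1.2 * (1 / 16) ^ j
  have hT : ∀ j, ((T j).card : ℝ) ≤ exp (6 * s * (2 * j + 1)) := by
    intro j
    calc ((T j).card : ℝ) ≤ (F j).card * (F (j + 1)).card := by
          exact_mod_cast (Finset.card_filter_le _ _).trans_eq (Finset.card_product _ _)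
      _ ≤ exp (6 * j * s) * exp (6 * (j + 1 : ℕ) * s) := by gcongr <;> exact hcard _
      _ = _ := by rw [← exp_add]; congr 1; push_cast; ring
  have hsub : {z : Fin N → Fin s → ℝ | ∃ j < K + 1, ∃ A ∈ F j, ∃ B ∈ F (j + 1),
        (cubeMeasure s).real (symmDiff A B) ≤ 1.2 * (1 / 16) ^ j ∧
        2 * levelCoeff j * (1 / 4) ^ j * ε * N
          ≤ |dev (cubeMeasure s) z B - dev (cubeMeasure s) z A|}
      ⊆ ⋃ j ∈ Finset.range (K + 1), ⋃ AB ∈ T j, E j AB := by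
    rintro z ⟨j, hj, A, hA, B, hB, hAB, hz⟩
    simp only [Set.mem_iUnion]
    exact ⟨j, Finset.mem_range.mpr hj, (A, B),
      Finset.mem_filter.mpr ⟨Finset.mk_mem_product hA hB, hAB⟩, hz⟩
  have hlevel : ∀ j ∈ Finset.range (K + 1), P.real (⋃ AB ∈ T j, E j AB)
      ≤ 2 * exp (-(s * (1.595 + 0.74 * j))) * exp (-L) := by
    intro j hj
    have hjK : j ≤ K := Finset.mem_range_succ_iff.mp hj
    calc P.real (⋃ AB ∈ T j, E j AB) ≤ ∑ AB ∈ T j, P.real (E j AB) :=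
          measureReal_biUnion_finset_le _ _
      _ ≤ ∑ AB ∈ T j, 2 * exp (-((1.55 + 2.6 * j) * (ε ^ 2 * N))) := by
          refine Finset.sum_le_sum fun AB hAB => ?_
          obtain ⟨hm, hd⟩ := Finset.mem_filter.mp hAB
          obtain ⟨hA, hB⟩ := Finset.mem_product.mp hm
          exact level_tail _ N (hmeas _ _ hA) (hmeas _ _ hB) j hd hε0
            (level_slope hjK hε0 hε hεK)
      _ = (T j).card * (2 * exp (-((1.55 + 2.6 * j) * (4.9 * s + L)))) := by
          rw [Finset.sum_const, nsmul_eq_mul, hε2]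
      _ ≤ exp (6 * s * (2 * j + 1)) * (2 * exp (-((1.55 + 2.6 * j) * (4.9 * s) + L))) := by
          gcongr
          · exact hT j
          · have : 0 ≤ (0.55 + 2.6 * (j : ℝ)) * L := by positivity
            norm_num at this ⊢
            linarith
      _ = _ := by
          rw [mul_left_comm, ← exp_add, mul_assoc 2 (exp _), ← exp_add]
          congr 2
          ring
  calc _ ≤ _ := measureReal_mono hsub (measure_ne_top _ _)
    _ ≤ ∑ j ∈ Finset.range (K + 1), P.real (⋃ AB ∈ T j, E j AB) :=
        measureReal_biUnion_finset_le _ _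
    _ ≤ ∑ j ∈ Finset.range (K + 1), 2 * exp (-(s * (1.595 + 0.74 * j))) * exp (-L) :=
        Finset.sum_le_sum hlevel
    _ ≤ 1 * exp (-L) := by
        rw [← Finset.sum_mul]
        gcongr
        exact sum_prob s _ hs
    _ = _ := one_mul _

theorem stmt_0 (s N : ℕ) (hs : 1 ≤ s) (hN : 1 ≤ N) (q : ℝ) (hq : q ∈ Set.Ioo (0:ℝ) 1) :
    ENNReal.ofReal q ≤
      (Measure.pi fun _ : Fin N => Measure.pi fun _ : Fin s => volume.restrict (Set.Icc (0:ℝ) 1))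
        {z : Fin N → Fin s → ℝ |
          starDiscrepancy s N z ≤
            5.7 * Real.sqrt (4.9 + Real.log (1 - q)⁻¹ / s) * (Real.sqrt s / Real.sqrt N)} := by
  have hs' : (0 : ℝ) < s := by exact_mod_cast hs
  have hN' : (0 : ℝ) < N := by exact_mod_cast hN
  have hq1 : 0 < 1 - q := by linarith [hq.2]
  set L := Real.log (1 - q)⁻¹ with hLdef
  have hL : 0 ≤ L := log_nonneg ((one_le_inv₀ hq1).mpr (by linarith [hq.1]))
  have hexpL : exp (-L) = 1 - q := by rw [hLdef, log_inv, neg_neg, exp_log hq1]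
  set ε := Real.sqrt (4.9 + L / s) * (Real.sqrt s / Real.sqrt N) with hεdef
  have hε0 : 0 < ε := by positivity
  have hε2 : ε ^ 2 * N = 4.9 * s + L := by
    rw [hεdef, mul_pow, div_pow, sq_sqrt (by positivity), sq_sqrt hs'.le, sq_sqrt hN'.le]
    field_simp
  rw [mul_assoc, ← hεdef]
  change ENNReal.ofReal q ≤ (Measure.pi fun _ : Fin N => cubeMeasure s) _
  set P := Measure.pi fun _ : Fin N => cubeMeasure s with hP
  set S := {z : Fin N → Fin s → ℝ | starDiscrepancy s N z ≤ 5.7 * ε} with hS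
  rw [← ofReal_measureReal (measure_ne_top P S)]
  apply ENNReal.ofReal_le_ofReal
  rcases le_total ε (1 / 5.7) with hε | hε
  swap
  · -- the asserted bound is at least `1`
    have huniv : S = Set.univ := by
      refine Set.eq_univ_of_forall fun z => starDiscrepancy_le hN z fun x _ => ?_
      refine (abs_dev_le _ z _).trans ?_
      have : 1 ≤ 5.7 * ε := by norm_num at hε ⊢; linarith
      nlinarith
    rw [huniv, probReal_univ]
    exact hq.2.le
  obtain ⟨K, hKlt, hKle⟩ := exists_nat_pow_near_of_lt_one (x := ε) (y := (1 / 16 : ℝ)) hε0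
    (hε.trans (by norm_num)) (by norm_num) (by norm_num)
  have hcover : ∀ k : ℕ, ∃ F : Finset (Set (Fin s → ℝ)), (k = 0 → F = {∅}) ∧
      (F.card : ℝ) ≤ exp (6 * k * s) ∧ (∀ A ∈ F, MeasurableSet A) ∧
      (1 ≤ k → ∀ x ∈ Set.Icc (0 : Fin s → ℝ) 1, ∃ A ∈ F, ∃ B ∈ F,
        A ⊆ Set.Icc 0 x ∧ Set.Icc 0 x ⊆ B ∧
        (cubeMeasure s).real B - (cubeMeasure s).real A ≤ 1.1 * (1 / 16 : ℝ) ^ k) := by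
    intro k
    rcases Nat.eq_zero_or_pos k with rfl | hk
    · exact ⟨{∅}, fun _ => rfl, by simp, by simp, by omega⟩
    · obtain ⟨F, h1, h2, h3⟩ := exists_cover hs hk
      exact ⟨F, by omega, h1, h2, fun _ => h3⟩
  choose F hF0 hcard hmeas hF using hcover
  have hbad := bad_event_bound hs F hcard hmeas hL hε0.le hε2 hε hKle
  set bad := {z : Fin N → Fin s → ℝ | ∃ j < K + 1, ∃ A ∈ F j, ∃ B ∈ F (j + 1),
        (cubeMeasure s).real (symmDiff A B) ≤ 1.2 * (1 / 16) ^ j ∧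
        2 * levelCoeff j * (1 / 4) ^ j * ε * N
          ≤ |dev (cubeMeasure s) z B - dev (cubeMeasure s) z A|} with hbaddef
  have hall : Set.univ ⊆ S ∪ bad := by
    intro z _
    by_contra hz
    have hzS : z ∉ S := fun h => hz (Or.inl h)
    have hzb : z ∉ bad := fun h => hz (Or.inr h)
    refine hzS (starDiscrepancy_le hN z fun x hx => ?_)
    have := dev_le_of_chain F (hF0 0 rfl) hF hmeas K
      (fun j => 2 * levelCoeff j * (1 / 4) ^ j * ε * N) z (fun j hj A hA B hB hAB => by
        by_contra hcon
        exact hzb ⟨j, hj, A, hA, B, hB, hAB, (not_le.mp hcon).le⟩) x hx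
    refine this.trans ?_
    rw [← Finset.sum_mul, ← Finset.sum_mul, ← add_mul]
    gcongr
    have := mul_le_mul_of_nonneg_right (sum_level (K + 1)) hε0.le
    norm_num at *
    linarith
  have h1 : 1 ≤ P.real S + P.real bad := by
    calc (1 : ℝ) = P.real Set.univ := probReal_univ.symm
      _ ≤ P.real (S ∪ bad) := measureReal_mono hall
      _ ≤ _ := measureReal_union_le _ _
  rw [hexpL] at hbad
  linarith
end

section
/- For every dimension s ≥ 1 and every N ≥ 1 there exists a set of N points z_1, …, z_N in [0,1]^s whose star-discrepancy satisfies D*_N(z_1, …, z_N) ≤ 13 · √s/√N. -/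
/-!
The points are chosen at random, independently and uniformly in the cube, and the discrepancy is
bounded by chaining along bracketing covers with mesh `16 ^ (-k)`.

The cover of level `k` consists of the boxes whose corners have coordinates `q ^ m i`, where
`q = 1 - 16 ^ (-k) / s`. The volume of such a box is `q ^ ∑ i, m i`, so a step in every coordinate
changes it by at most `1 - q ^ s ≤ 16 ^ (-k)`, and exponent vectors with a large sum can be
discarded because their boxes have volume below `16 ^ (-k)` (`exists_bracket`). What remains is at
most `(e * 64 ^ k) ^ s` boxes (`card_gridIdx_le`). That the base does not depend on `s` is the reason
why the final bound has no logarithmic factor.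

Write `ε = √s / √N`. A box of level `k + 1` differs from a set of level `k` contained in it by a
set of measure at most `16 ^ (-k)`. By Chernoff's inequality and the union bound
(`exists_localDisc_le`, `sum_levels_lt_one`), some point set has discrepancy at most
`2 * (3 + k) * 4 ^ (-k) * ε` in all these differences simultaneously. Summation over `k` bounds the
discrepancy in the sets of level `K` by `9 * ε` (`exists_chain`). With `K` minimal such that
`16 ^ (-K) ≤ 4 * ε`, passing from the cover to arbitrary boxes costs another `4 * ε`.
-/

open MeasureTheory Real

/-! ### Concentration -/

/-- The signed local discrepancy of the points `z` in the set `A`: the fraction of the points lying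
in `A`, minus the measure of `A`. -/
noncomputable def localDisc {Ω : Type*} [MeasurableSpace Ω] (μ : Measure Ω) {N : ℕ}
    (z : Fin N → Ω) (A : Set Ω) : ℝ :=
  (∑ n, A.indicator (1 : Ω → ℝ) (z n)) / N - μ.real A

section Concentration

lemma exp_indicator {Ω : Type*} (A : Set Ω) (t p : ℝ) (x : Ω) :
    exp (t * (A.indicator (1 : Ω → ℝ) x - p))
      = exp (-(t * p)) * (1 + (exp t - 1) * A.indicator (1 : Ω → ℝ) x) := by
  by_cases hx : x ∈ A
  · simp only [Set.indicator_of_mem hx, Pi.one_apply]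
    rw [show t * (1 - p) = -(t * p) + t by ring, exp_add]; ring
  · simp [Set.indicator_of_notMem hx]

variable {Ω : Type*} [MeasurableSpace Ω] (μ : Measure Ω)

lemma exp_localDisc {N : ℕ} (hN : 1 ≤ N) (A : Set Ω) (t : ℝ) (z : Fin N → Ω) :
    exp (N * (t * localDisc μ z A))
      = ∏ n, exp (t * (A.indicator (1 : Ω → ℝ) (z n) - μ.real A)) := by
  have hN' : (N : ℝ) ≠ 0 := by positivity
  rw [← exp_sum, ← Finset.mul_sum, Finset.sum_sub_distrib]
  congr 1
  simp only [localDisc, Finset.sum_const, Finset.card_univ, Fintype.card_fin, nsmul_eq_mul]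
  field_simp

variable [IsProbabilityMeasure μ]

lemma integrable_exp_indicator {A : Set Ω} (hA : MeasurableSet A) (t p : ℝ) :
    Integrable (fun x => exp (t * (A.indicator (1 : Ω → ℝ) x - p))) μ := by
  simp_rw [exp_indicator]
  exact ((integrable_const _).add (((integrable_const (1 : ℝ)).indicator hA).const_mul _)).const_mul _

/-- Moment generating function of a centred indicator, from `exp t ≤ 1 + t + t ^ 2` for `|t| ≤ 1`.
The factor `μ.real A` in the exponent is what makes small sets cheap in the chaining. -/
lemma integral_exp_indicator_le {A : Set Ω} (hA : MeasurableSet A) {t : ℝ} (ht : |t| ≤ 1) :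
    ∫ x, exp (t * (A.indicator (1 : Ω → ℝ) x - μ.real A)) ∂μ ≤ exp (μ.real A * t ^ 2) := by
  have hi : Integrable (A.indicator (1 : Ω → ℝ)) μ := (integrable_const (1 : ℝ)).indicator hA
  simp_rw [exp_indicator]
  rw [integral_const_mul, integral_add (integrable_const _) (hi.const_mul _), integral_const_mul,
    integral_indicator_one hA]
  simp only [integral_const, probReal_univ, smul_eq_mul, mul_one]
  have h1 := (abs_le.1 (abs_exp_sub_one_sub_id_le ht)).2
  have hp : 0 ≤ μ.real A := measureReal_nonneg
  have h2 : 1 + (exp t - 1) * μ.real A ≤ exp (μ.real A * t + μ.real A * t ^ 2) := by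
    have := add_one_le_exp (μ.real A * t + μ.real A * t ^ 2)
    nlinarith
  calc exp (-(t * μ.real A)) * (1 + (exp t - 1) * μ.real A)
      ≤ exp (-(t * μ.real A)) * exp (μ.real A * t + μ.real A * t ^ 2) := by gcongr
    _ = exp (μ.real A * t ^ 2) := by rw [← exp_add]; congr 1; ring

lemma integrable_exp_localDisc {N : ℕ} (hN : 1 ≤ N) {A : Set Ω} (hA : MeasurableSet A) (t : ℝ) :
    Integrable (fun z : Fin N → Ω => exp (N * (t * localDisc μ z A))) (Measure.pi fun _ => μ) := by
  simp_rw [exp_localDisc μ hN]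
  exact Integrable.fintype_prod (fun _ => integrable_exp_indicator μ hA t _)

lemma integral_exp_localDisc_le {N : ℕ} (hN : 1 ≤ N) {A : Set Ω} (hA : MeasurableSet A) {t : ℝ}
    (ht : |t| ≤ 1) :
    ∫ z : Fin N → Ω, exp (N * (t * localDisc μ z A)) ∂(Measure.pi fun _ => μ)
      ≤ exp (N * (μ.real A * t ^ 2)) := by
  simp_rw [exp_localDisc μ hN]
  rw [integral_fintype_prod_eq_pow
    (fun x => exp (t * (A.indicator (1 : Ω → ℝ) x - μ.real A))), Fintype.card_fin, exp_nat_mul]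
  exact pow_le_pow_left₀ (integral_nonneg fun _ => (exp_pos _).le)
    (integral_exp_indicator_le μ hA ht) _

/-- Chernoff's method and the union bound in one step. The expectation, over independent points
with law `μ`, of the sum over `i ∈ T` of the two exponentials
`exp (N * (± lam i * localDisc - lam i * a i))` is at most the left-hand side of `hsum`. Hence for
some `z` this sum is below `1`, and then each single exponent is negative. -/
lemma exists_localDisc_le {ι : Type*} {N : ℕ} (hN : 1 ≤ N) (T : Finset ι) (D : ι → Set Ω)
    (hD : ∀ i, MeasurableSet (D i)) (lam a : ι → ℝ)
    (hlam0 : ∀ i ∈ T, 0 < lam i) (hlam1 : ∀ i ∈ T, lam i ≤ 1)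
    (hsum : ∑ i ∈ T, 2 * exp (N * (μ.real (D i) * lam i ^ 2 - lam i * a i)) < 1) :
    ∃ z : Fin N → Ω, ∀ i ∈ T, |localDisc μ z (D i)| ≤ a i := by
  have hN' : (0 : ℝ) < N := by positivity
  set f : (Fin N → Ω) → ℝ := fun z => ∑ i ∈ T, exp (-(N * (lam i * a i))) *
    (exp (N * (lam i * localDisc μ z (D i))) + exp (N * (-lam i * localDisc μ z (D i)))) with hf
  have hint : ∀ i ∈ T, Integrable (fun z => exp (-(N * (lam i * a i))) *
      (exp (N * (lam i * localDisc μ z (D i))) + exp (N * (-lam i * localDisc μ z (D i)))))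
      (Measure.pi fun _ : Fin N => μ) := fun i _ =>
    ((integrable_exp_localDisc μ hN (hD i) _).add
      (integrable_exp_localDisc μ hN (hD i) _)).const_mul _
  have hfi : Integrable f (Measure.pi fun _ => μ) := integrable_finsetSum T hint
  obtain ⟨z, hz⟩ := exists_le_integral hfi
  have hlt : f z < 1 := by
    refine (hz.trans ?_).trans_lt hsum
    rw [hf, integral_finsetSum T hint]
    refine Finset.sum_le_sum fun i hi => ?_
    have habs : |lam i| ≤ 1 := by rw [abs_of_pos (hlam0 i hi)]; exact hlam1 i hi
    rw [integral_const_mul, integral_add (integrable_exp_localDisc μ hN (hD i) _)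
      (integrable_exp_localDisc μ hN (hD i) _)]
    have h1 := integral_exp_localDisc_le μ hN (hD i) habs
    have h2 := integral_exp_localDisc_le μ hN (hD i) (t := -lam i) (by rwa [abs_neg])
    rw [neg_sq] at h2
    calc _ ≤ exp (-(N * (lam i * a i))) * (exp (N * (μ.real (D i) * lam i ^ 2))
          + exp (N * (μ.real (D i) * lam i ^ 2))) := by gcongr
      _ = _ := by
        rw [← two_mul, mul_left_comm, ← exp_add]; congr 2; ring
  refine ⟨z, fun i hi => ?_⟩
  have hterm : exp (-(N * (lam i * a i))) *
      (exp (N * (lam i * localDisc μ z (D i))) + exp (N * (-lam i * localDisc μ z (D i)))) < 1 :=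
    (Finset.single_le_sum (f := fun i => exp (-(N * (lam i * a i))) *
      (exp (N * (lam i * localDisc μ z (D i))) + exp (N * (-lam i * localDisc μ z (D i)))))
      (fun j _ => by positivity) hi).trans_lt hlt
  have hl := mul_pos hN' (hlam0 i hi)
  rw [mul_add, ← exp_add, ← exp_add] at hterm
  have h1 := exp_lt_one_iff.1 ((lt_add_of_pos_right _ (exp_pos _)).trans hterm)
  have h2 := exp_lt_one_iff.1 ((lt_add_of_pos_left _ (exp_pos _)).trans hterm)
  rw [abs_le]
  constructor <;> nlinarith

end Concentration

/-! ### Bracketing covers of the anchored boxes -/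

/-- The box `[0, x]`, as a subset of the cube `[0,1]^s` with its uniform probability measure. -/
def box {s : ℕ} (x : Fin s → ℝ) : Set (Fin s → unitInterval) := {ω | ∀ i, (ω i : ℝ) ≤ x i}

lemma measurableSet_box {s : ℕ} (x : Fin s → ℝ) : MeasurableSet (box x) := by
  have : box x = ⋂ i, {ω : Fin s → unitInterval | (ω i : ℝ) ≤ x i} := by ext; simp [box]
  rw [this]
  exact MeasurableSet.iInter fun i =>
    measurableSet_le (measurable_subtype_coe.comp (measurable_pi_apply i)) measurable_const

lemma volume_real_box {s : ℕ} {x : Fin s → ℝ} (hx0 : ∀ i, 0 ≤ x i) (hx1 : ∀ i, x i ≤ 1) :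
    volume.real (box x) = ∏ i, x i := by
  have : box x = Set.univ.pi fun i => Set.Iic (⟨x i, hx0 i, hx1 i⟩ : unitInterval) := by
    ext ω; simp [box, Pi.le_def, ← Subtype.coe_le_coe]
  rw [this, measureReal_def, volume_pi_pi, ENNReal.toReal_prod]
  refine Finset.prod_congr rfl fun i _ => ?_
  simp [ENNReal.toReal_ofReal (hx0 i)]

lemma box_mono {s : ℕ} {x y : Fin s → ℝ} (h : ∀ i, x i ≤ y i) : box x ⊆ box y :=
  fun _ hω i => (hω i).trans (h i)

/-- The ratio of the geometric grid of level `k`. It is chosen so that moving one grid step in all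
`s` coordinates changes the volume of a box by at most `16 ^ (-k)`. -/
noncomputable def gridRatio (s k : ℕ) : ℝ := 1 - 1 / (16 ^ k * s)

/-- The largest total exponent used in level `k`. Boxes with total exponent `s * (3 * k * 16 ^ k)`
already have volume at most `16 ^ (-k)`; the additional `s` leaves room for one grid step in every
coordinate. -/
def gridBound (s k : ℕ) : ℕ := s * (3 * k * 16 ^ k + 1)

/-- The exponent vectors of the grid of level `k`; see `mem_gridIdx`. -/
def gridIdx (s k : ℕ) : Finset (Fin s → ℕ) :=
  (Fintype.piFinset fun _ => Finset.range (gridBound s k + 1)).filter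
    fun m => ∑ i, m i ≤ gridBound s k

lemma mem_gridIdx {s k : ℕ} {m : Fin s → ℕ} : m ∈ gridIdx s k ↔ ∑ i, m i ≤ gridBound s k := by
  simp only [gridIdx, Finset.mem_filter, Fintype.mem_piFinset, Finset.mem_range, and_iff_right_iff_imp]
  intro h i
  exact Nat.lt_succ_of_le ((Finset.single_le_sum (f := m) (fun _ _ => Nat.zero_le _)
    (Finset.mem_univ i)).trans h)

/-- The grid point of level `k` with exponent vector `m`. -/
noncomputable def gridPoint (s k : ℕ) (m : Fin s → ℕ) : Fin s → ℝ := fun i => gridRatio s k ^ m i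

/-- The sets of the bracketing cover of level `k`: the empty set, the whole cube and, for `k ≠ 0`,
the boxes whose corner is a grid point. Level `0` contains only the two trivial sets, on which the
local discrepancy vanishes. -/
def IsCover (s k : ℕ) (A : Set (Fin s → unitInterval)) : Prop :=
  A = ∅ ∨ A = Set.univ ∨ (k ≠ 0 ∧ ∃ m ∈ gridIdx s k, A = box (gridPoint s k m))

lemma gridRatio_pos {s k : ℕ} (hs : 1 ≤ s) (hk : k ≠ 0) : 0 < gridRatio s k := by
  have h1 : (1 : ℝ) < 16 ^ k := one_lt_pow₀ (by norm_num) hk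
  have h2 : (1 : ℝ) ≤ s := by exact_mod_cast hs
  rw [gridRatio, sub_pos, div_lt_one (by positivity)]
  nlinarith

lemma gridRatio_lt_one {s k : ℕ} (hs : 1 ≤ s) : gridRatio s k < 1 := by
  have : (0 : ℝ) < 1 / (16 ^ k * s) := by positivity
  rw [gridRatio]; linarith

lemma volume_real_gridBox {s k : ℕ} (hs : 1 ≤ s) (hk : k ≠ 0) (m : Fin s → ℕ) :
    volume.real (box (gridPoint s k m)) = gridRatio s k ^ ∑ i, m i := by
  rw [volume_real_box (x := gridPoint s k m) (fun i => pow_nonneg (gridRatio_pos hs hk).le _)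
    (fun i => pow_le_one₀ (gridRatio_pos hs hk).le (gridRatio_lt_one hs).le)]
  simp [gridPoint, Finset.prod_pow_eq_pow_sum]

/-- One grid step in every coordinate, by Bernoulli's inequality. -/
lemma one_sub_gridRatio_pow_le {s k : ℕ} (hs : 1 ≤ s) (hk : k ≠ 0) :
    1 - gridRatio s k ^ s ≤ 1 / 16 ^ k := by
  have h := one_add_mul_le_pow (a := -(1 / (16 ^ k * s) : ℝ))
    (by have := gridRatio_pos hs hk; rw [gridRatio] at this; linarith) s
  have hs' : (s : ℝ) ≠ 0 := by positivity
  have e : (s : ℝ) * -(1 / (16 ^ k * s) : ℝ) = -(1 / 16 ^ k) := by field_simp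
  rw [e] at h
  rw [gridRatio, sub_eq_add_neg 1 (1 / (16 ^ k * s) : ℝ)]
  linarith

lemma gridRatio_pow_le {s k : ℕ} (hs : 1 ≤ s) (hk : k ≠ 0) :
    gridRatio s k ^ (s * (3 * k * 16 ^ k)) ≤ 1 / 16 ^ k := by
  have hs' : (s : ℝ) ≠ 0 := by positivity
  have h1 : gridRatio s k ≤ exp (-(1 / (16 ^ k * s))) := by
    have := add_one_le_exp (-(1 / (16 ^ k * s) : ℝ))
    rw [gridRatio]; linarith
  have h3 : exp (-3 : ℝ) ≤ 1 / 16 := by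
    rw [exp_neg, ← one_div]
    refine one_div_le_one_div_of_le (by norm_num) ?_
    have : exp 3 = exp 1 ^ 3 := by rw [← exp_nat_mul]; norm_num
    rw [this]
    have h := pow_le_pow_left₀ (by norm_num) exp_one_gt_d9.le 3
    refine le_trans ?_ h
    norm_num
  calc gridRatio s k ^ (s * (3 * k * 16 ^ k))
      ≤ exp (-(1 / (16 ^ k * s))) ^ (s * (3 * k * 16 ^ k)) :=
        pow_le_pow_left₀ (gridRatio_pos hs hk).le h1 _
    _ = exp (-3) ^ k := by
        rw [← exp_nat_mul, ← exp_nat_mul]; congr 1; push_cast; field_simp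
    _ ≤ (1 / 16) ^ k := pow_le_pow_left₀ (exp_pos _).le h3 _
    _ = 1 / 16 ^ k := by rw [div_pow, one_pow]

lemma exists_le_sum_eq {s n : ℕ} (m : Fin s → ℕ) (h : n ≤ ∑ i, m i) :
    ∃ m' : Fin s → ℕ, (∀ i, m' i ≤ m i) ∧ ∑ i, m' i = n := by
  induction n with
  | zero => exact ⟨0, by simp, by simp⟩
  | succ n ih =>
    obtain ⟨m', h1, h2⟩ := ih (by omega)
    obtain ⟨j, hj⟩ : ∃ j, m' j < m j := by
      by_contra! hc
      have := Finset.sum_le_sum (s := Finset.univ) fun i _ => hc i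
      omega
    refine ⟨fun i => m' i + if i = j then 1 else 0, fun i => ?_, ?_⟩
    · have := h1 i
      dsimp only
      split_ifs with hij
      · subst hij; omega
      · omega
    · simp [Finset.sum_add_distrib, h2]

/-- Every box lies between two members of the cover of level `k` whose volumes differ by at most
`16 ^ (-k)`. Coordinates are rounded up and down to powers of `gridRatio s k`; if the resulting
exponents are too large for the grid, the box is so small that `∅` serves as lower bracket. -/
lemma exists_bracket {s : ℕ} (hs : 1 ≤ s) (k : ℕ) {x : Fin s → ℝ} (hx0 : ∀ i, 0 ≤ x i)
    (hx1 : ∀ i, x i ≤ 1) :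
    ∃ A A', IsCover s k A ∧ IsCover s k A' ∧ A ⊆ box x ∧ box x ⊆ A' ∧
      volume.real A' - volume.real A ≤ 1 / 16 ^ k := by
  rcases eq_or_ne k 0 with rfl | hk
  · exact ⟨∅, Set.univ, Or.inl rfl, Or.inr (Or.inl rfl), Set.empty_subset _, Set.subset_univ _,
      by simp⟩
  have hq0 := gridRatio_pos hs hk
  have hq1 := gridRatio_lt_one (k := k) hs
  -- The second alternative is only there for `x i = 0`, which has no lower grid neighbour.
  have hm : ∀ i, ∃ m : ℕ, x i ≤ gridRatio s k ^ m ∧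
      (gridRatio s k ^ (m + 1) ≤ x i ∨ gridBound s k ≤ m) := by
    intro i
    rcases (hx0 i).eq_or_lt with h | h
    · exact ⟨gridBound s k, by rw [← h]; positivity, Or.inr le_rfl⟩
    · obtain ⟨n, h1, h2⟩ := exists_nat_pow_near_of_lt_one h (hx1 i) hq0 hq1
      exact ⟨n, h2, Or.inl h1.le⟩
  choose m hm1 hm2 using hm
  by_cases hB : ∑ i, m i + s ≤ gridBound s k
  · have hsum : ∑ i, (m i + 1) = ∑ i, m i + s := by simp [Finset.sum_add_distrib]
    refine ⟨box (gridPoint s k fun i => m i + 1), box (gridPoint s k m),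
      Or.inr (Or.inr ⟨hk, _, mem_gridIdx.2 (hsum.trans_le hB), rfl⟩),
      Or.inr (Or.inr ⟨hk, _, mem_gridIdx.2 (by omega), rfl⟩), box_mono fun i => ?_,
      box_mono hm1, ?_⟩
    · refine (hm2 i).resolve_right fun h => ?_
      have := Finset.single_le_sum (f := m) (fun _ _ => Nat.zero_le _) (Finset.mem_univ i)
      omega
    · rw [volume_real_gridBox hs hk, volume_real_gridBox hs hk, hsum, pow_add]
      have h1 := one_sub_gridRatio_pow_le hs hk
      have h2 : gridRatio s k ^ ∑ i, m i ≤ 1 := pow_le_one₀ hq0.le hq1.le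
      have h3 : gridRatio s k ^ s ≤ 1 := pow_le_one₀ hq0.le hq1.le
      nlinarith
  · have hge : s * (3 * k * 16 ^ k) ≤ ∑ i, m i := by
      rw [gridBound, mul_add, mul_one] at hB
      omega
    obtain ⟨m', h1, h2⟩ := exists_le_sum_eq m hge
    refine ⟨∅, box (gridPoint s k m'), Or.inl rfl,
      Or.inr (Or.inr ⟨hk, m', mem_gridIdx.2 (h2.trans_le ?_), rfl⟩), Set.empty_subset _,
      box_mono fun i => (hm1 i).trans (pow_le_pow_of_le_one hq0.le hq1.le (h1 i)), ?_⟩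
    · rw [gridBound]; gcongr; omega
    · rw [volume_real_gridBox hs hk, h2, measureReal_empty, sub_zero]
      exact gridRatio_pow_le hs hk

/-- The number of exponent vectors with sum at most `s * c` is at most
`y ^ (-(s * c)) * (∑ j, y ^ j) ^ s` for every `y ∈ (0, 1)`; here `y = c / (c + 1)`, which gives
`(exp 1 * (c + 1)) ^ s`. -/
lemma card_gridIdx_le {s k : ℕ} (hk : k ≠ 0) :
    ((gridIdx s k).card : ℝ) ≤ (exp 1 * 64 ^ k) ^ s := by
  set c : ℕ := 3 * k * 16 ^ k + 1 with hc
  have hc0 : (0 : ℝ) < c := by positivity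
  have hB : gridBound s k = c * s := by rw [gridBound, mul_comm]
  set y : ℝ := c / (c + 1) with hy
  have hy0 : 0 < y := by positivity
  have hy1 : y < 1 := by rw [hy, div_lt_one (by positivity)]; linarith
  have h1 : ((gridIdx s k).card : ℝ) * (y ^ c) ^ s ≤ (c + 1) ^ s := by
    calc ((gridIdx s k).card : ℝ) * (y ^ c) ^ s
        = ∑ m ∈ gridIdx s k, y ^ gridBound s k := by
          rw [Finset.sum_const, nsmul_eq_mul, hB, pow_mul]
      _ ≤ ∑ m ∈ gridIdx s k, ∏ i, y ^ m i := by
          refine Finset.sum_le_sum fun m hm => ?_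
          rw [Finset.prod_pow_eq_pow_sum]
          exact pow_le_pow_of_le_one hy0.le hy1.le (mem_gridIdx.1 hm)
      _ ≤ ∑ m ∈ Fintype.piFinset fun _ : Fin s => Finset.range (gridBound s k + 1),
            ∏ i, y ^ m i :=
          Finset.sum_le_sum_of_subset_of_nonneg (Finset.filter_subset _ _)
            fun _ _ _ => by positivity
      _ = (∑ j ∈ Finset.range (gridBound s k + 1), y ^ j) ^ s := by
          rw [← Finset.prod_univ_sum (fun _ : Fin s => Finset.range (gridBound s k + 1))
            (fun _ j => y ^ j)]
          simp
      _ ≤ (c + 1) ^ s := by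
          refine pow_le_pow_left₀ (by positivity) ?_ _
          have h1y : 1 - y = 1 / (c + 1) := by rw [hy]; field_simp; ring
          have h := geom_sum_mul_neg y (gridBound s k + 1)
          rw [h1y, mul_one_div, div_eq_iff (by positivity)] at h
          rw [h]
          have : 0 < y ^ (gridBound s k + 1) := by positivity
          nlinarith
  have h2 : 1 ≤ exp 1 * y ^ c := by
    have h3 : (1 + 1 / (c : ℝ)) ^ c ≤ exp 1 := by
      have := pow_le_pow_left₀ (by positivity) (add_one_le_exp (1 / (c : ℝ))) c
      rw [← exp_nat_mul, mul_one_div_cancel hc0.ne', add_comm] at this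
      exact this
    calc (1 : ℝ) = (1 + 1 / (c : ℝ)) ^ c * y ^ c := by
          rw [← mul_pow, hy, show (1 + 1 / (c : ℝ)) * (c / (c + 1)) = 1 by field_simp, one_pow]
      _ ≤ _ := by gcongr
  have h4 : ((c : ℝ) + 1) ≤ 64 ^ k := by
    have : ∀ j : ℕ, 3 * (j + 1) * 16 ^ (j + 1) + 2 ≤ 64 ^ (j + 1) := by
      intro j
      induction j with
      | zero => norm_num
      | succ j ih =>
        rw [pow_succ 16 (j + 1), pow_succ 64 (j + 1)]
        have : 0 < 16 ^ (j + 1) := by positivity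
        nlinarith
    obtain ⟨j, rfl⟩ := Nat.exists_eq_succ_of_ne_zero hk
    have := this j
    rw [hc]
    exact_mod_cast this
  calc ((gridIdx s k).card : ℝ) = (gridIdx s k).card * 1 ^ s := by simp
    _ ≤ (gridIdx s k).card * (exp 1 * y ^ c) ^ s := by gcongr
    _ = exp 1 ^ s * ((gridIdx s k).card * (y ^ c) ^ s) := by rw [mul_pow]; ring
    _ ≤ exp 1 ^ s * (64 ^ k) ^ s := by
        gcongr
        exact h1.trans (pow_le_pow_left₀ (by positivity) h4 _)
    _ = _ := by rw [mul_pow]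

/-! ### Chaining -/

section LocalDisc

variable {Ω : Type*} [MeasurableSpace Ω] (μ : Measure Ω) {N : ℕ}

lemma localDisc_eq_add_diff [IsProbabilityMeasure μ] (z : Fin N → Ω) {A B : Set Ω} (hB : MeasurableSet B) (h : B ⊆ A) :
    localDisc μ z A = localDisc μ z B + localDisc μ z (A \ B) := by
  have hi : ∀ x, A.indicator (1 : Ω → ℝ) x
      = B.indicator (1 : Ω → ℝ) x + (A \ B).indicator (1 : Ω → ℝ) x := by
    intro x
    by_cases hB : x ∈ B
    · simp [hB, h hB]
    · by_cases hA : x ∈ A <;> simp [hA, hB]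
  simp only [localDisc, measureReal_sdiff (μ := μ) h hB, hi, Finset.sum_add_distrib]
  ring

lemma localDisc_le_add (z : Fin N → Ω) {A B : Set Ω} (h : B ⊆ A) :
    localDisc μ z B ≤ localDisc μ z A + (μ.real A - μ.real B) := by
  have : (∑ n, B.indicator (1 : Ω → ℝ) (z n)) / N ≤ (∑ n, A.indicator (1 : Ω → ℝ) (z n)) / N := by
    gcongr with n
    exact zero_le_one
  simp only [localDisc]
  linarith

end LocalDisc

lemma IsCover.measurableSet {s k : ℕ} {A : Set (Fin s → unitInterval)} (h : IsCover s k A) :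
    MeasurableSet A := by
  rcases h with rfl | rfl | ⟨_, m, _, rfl⟩
  · exact MeasurableSet.empty
  · exact MeasurableSet.univ
  · exact measurableSet_box _

/-- The link of the chain: a grid box of level `k + 1` is approximated from below in level `k`. -/
lemma exists_lower {s : ℕ} (hs : 1 ≤ s) (k : ℕ) (m : Fin s → ℕ) :
    ∃ A, IsCover s k A ∧ A ⊆ box (gridPoint s (k + 1) m) ∧
      volume.real (box (gridPoint s (k + 1) m) \ A) ≤ 1 / 16 ^ k := by
  have hq0 := gridRatio_pos (k := k + 1) hs (by omega)
  obtain ⟨A, A', hA, -, h1, h2, h3⟩ := exists_bracket hs k (x := gridPoint s (k + 1) m)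
    (fun i => pow_nonneg hq0.le _) (fun i => pow_le_one₀ hq0.le (gridRatio_lt_one hs).le)
  refine ⟨A, hA, h1, ?_⟩
  rw [measureReal_sdiff h1 hA.measurableSet]
  have := measureReal_mono (μ := volume) h2
  linarith

/-- The total failure probability. Level `k` compares the boxes of level `k + 1` with sets of level
`k`, and each comparison fails with probability at most `2 * exp (-s * (3 + k) ^ 2)`. -/
lemma sum_levels_lt_one {s : ℕ} (hs : 1 ≤ s) (K : ℕ) :
    ∑ k ∈ Finset.range K, ((gridIdx s (k + 1)).card : ℝ) * (2 * exp (-(s * (3 + k) ^ 2))) < 1 := by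
  have he : (256 : ℝ) ≤ exp 6 := by
    have : exp 6 = exp 1 ^ 6 := by rw [← exp_nat_mul]; norm_num
    rw [this]
    refine le_trans ?_ (pow_le_pow_left₀ (by norm_num) exp_one_gt_d9.le 6)
    norm_num
  have hbase : ∀ k : ℕ, exp 1 * 64 ^ (k + 1) * exp (-(3 + k) ^ 2) ≤ (1 / 4 : ℝ) ^ (k + 1) := by
    intro k
    have h6 : 64 * exp (-6) ≤ (1 / 4 : ℝ) := by
      rw [exp_neg, ← div_eq_mul_inv, div_le_iff₀ (exp_pos _)]; linarith
    calc exp 1 * 64 ^ (k + 1) * exp (-(3 + k : ℝ) ^ 2)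
        = 64 ^ (k + 1) * exp (1 - (3 + k : ℝ) ^ 2) := by
          rw [sub_eq_add_neg, exp_add]; ring
      _ ≤ 64 ^ (k + 1) * exp ((k + 1 : ℕ) * (-6)) := by
          gcongr
          push_cast
          nlinarith [sq_nonneg (k : ℝ)]
      _ = (64 * exp (-6)) ^ (k + 1) := by rw [exp_nat_mul, mul_pow]
      _ ≤ _ := pow_le_pow_left₀ (by positivity) h6 _
  have hterm : ∀ k : ℕ, ((gridIdx s (k + 1)).card : ℝ) * (2 * exp (-(s * (3 + k) ^ 2)))
      ≤ 2 * (1 / 4) ^ (k + 1) := by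
    intro k
    calc ((gridIdx s (k + 1)).card : ℝ) * (2 * exp (-(s * (3 + k) ^ 2)))
        ≤ (exp 1 * 64 ^ (k + 1)) ^ s * (2 * exp (-(s * (3 + k) ^ 2))) := by
          gcongr; exact card_gridIdx_le (by omega)
      _ = 2 * (exp 1 * 64 ^ (k + 1) * exp (-(3 + k) ^ 2)) ^ s := by
          rw [mul_pow _ (exp _), ← exp_nat_mul, mul_neg]; ring
      _ ≤ 2 * ((1 / 4) ^ (k + 1)) ^ s := by
          gcongr; exact hbase k
      _ ≤ 2 * (1 / 4) ^ (k + 1) := by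
          gcongr
          exact pow_le_of_le_one (by positivity) (pow_le_one₀ (by norm_num) (by norm_num)) (by omega)
  refine (Finset.sum_le_sum fun k _ => hterm k).trans_lt ?_
  have : ∀ K : ℕ, ∑ k ∈ Finset.range K, 2 * (1 / 4 : ℝ) ^ (k + 1) = 2 / 3 * (1 - (1 / 4) ^ K) := by
    intro K
    induction K with
    | zero => simp
    | succ K ih => rw [Finset.sum_range_succ, ih]; ring
  rw [this]
  have : (0 : ℝ) < (1 / 4) ^ K := by positivity
  linarith

lemma sum_chain_le (K : ℕ) : ∑ k ∈ Finset.range K, 2 * (3 + k : ℝ) / 4 ^ k ≤ 9 := by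
  -- The added term bounds the tail of the series, so that the left-hand side decreases in `K`.
  have : ∑ k ∈ Finset.range K, 2 * (3 + k : ℝ) / 4 ^ k + (8 * (3 + K) / 3 + 1) / 4 ^ K ≤ 9 := by
    induction K with
    | zero => norm_num
    | succ K ih =>
      refine le_trans ?_ ih
      rw [Finset.sum_range_succ, add_assoc]
      gcongr
      rw [pow_succ]
      field_simp
      push_cast
      linarith
  have : (0 : ℝ) ≤ (8 * (3 + K) / 3 + 1) / 4 ^ K := by positivity
  linarith

/-- Some point set has discrepancy at most `9 * √(s / N)` in all sets of the cover of level `K`,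
as long as the mesh of the preceding levels is at least `4 * √(s / N)`; that hypothesis
keeps the Chernoff parameters at most `1`. -/
lemma exists_chain {s N : ℕ} (hs : 1 ≤ s) (hN : 1 ≤ N) (K : ℕ)
    (hK : ∀ k < K, 4 * (√s / √N) ≤ 1 / 16 ^ k) :
    ∃ z : Fin N → Fin s → unitInterval, ∀ A, IsCover s K A →
      |localDisc volume z A| ≤ 9 * (√s / √N) := by
  have hs' : (0 : ℝ) < s := by positivity
  have hN' : (0 : ℝ) < N := by positivity
  set ε : ℝ := √s / √N with hε
  have hε0 : 0 < ε := by positivity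
  have hε2 : N * ε ^ 2 = s := by
    rw [hε, div_pow, sq_sqrt hs'.le, sq_sqrt hN'.le]; field_simp
  choose lower hl1 hl2 hl3 using exists_lower hs
  -- With `δ = 16 ^ (-k)` and `h = s * (3 + k) ^ 2`, the parameter of level `k` is `√(h / (N * δ))`
  -- and the deviation is `2 * √(δ * h / N)`, so the exponent `N * (δ * lam ^ 2 - lam * a)` is `-h`.
  obtain ⟨z, hz⟩ := exists_localDisc_le (volume : Measure (Fin s → unitInterval)) hN
    ((Finset.range K).sigma fun k => gridIdx s (k + 1))
    (fun p => box (gridPoint s (p.1 + 1) p.2) \ lower p.1 p.2)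
    (fun p => (measurableSet_box _).diff (hl1 _ _).measurableSet)
    (fun p => (3 + p.1) * 4 ^ p.1 * ε) (fun p => 2 * (3 + p.1) / 4 ^ p.1 * ε)
    (fun p _ => by positivity)
    (fun p hp => by
      have hk := hK p.1 (Finset.mem_range.1 (Finset.mem_sigma.1 hp).1)
      have h4 : (p.1 : ℝ) + 1 ≤ 4 ^ p.1 := by exact_mod_cast Nat.lt_pow_self (by norm_num)
      have h16 : (16 : ℝ) ^ p.1 = 4 ^ p.1 * 4 ^ p.1 := by rw [← mul_pow]; norm_num
      rw [le_div_iff₀ (by positivity), h16] at hk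
      have h1 : (1 : ℝ) ≤ 4 ^ p.1 := one_le_pow₀ (by norm_num)
      have : (3 + p.1 : ℝ) ≤ 4 * 4 ^ p.1 := by linarith
      calc (3 + p.1) * 4 ^ p.1 * ε ≤ 4 * 4 ^ p.1 * 4 ^ p.1 * ε := by gcongr
        _ ≤ 1 := by linarith)
    (by
      rw [Finset.sum_sigma]
      refine lt_of_le_of_lt (Finset.sum_le_sum fun k _ => ?_) (sum_levels_lt_one hs K)
      rw [← nsmul_eq_mul]
      refine Finset.sum_le_card_nsmul _ _ _ fun m _ => ?_
      gcongr
      have h16 : (16 : ℝ) ^ k = 4 ^ k * 4 ^ k := by rw [← mul_pow]; norm_num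
      calc N * (volume.real (box (gridPoint s (k + 1) m) \ lower k m) * ((3 + k) * 4 ^ k * ε) ^ 2
            - (3 + k) * 4 ^ k * ε * (2 * (3 + k) / 4 ^ k * ε))
          ≤ N * (1 / 16 ^ k * ((3 + k) * 4 ^ k * ε) ^ 2
            - (3 + k) * 4 ^ k * ε * (2 * (3 + k) / 4 ^ k * ε)) := by
            gcongr; exact hl3 k m
        _ = -((N * ε ^ 2) * (3 + k) ^ 2) := by rw [h16]; field_simp; ring
        _ = _ := by rw [hε2])
  have hempty : localDisc volume z ∅ = 0 := by simp [localDisc]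
  have huniv : localDisc volume z Set.univ = 0 := by
    simp [localDisc, hN'.ne']
  have hchain : ∀ k ≤ K, ∀ A, IsCover s k A →
      |localDisc volume z A| ≤ ∑ j ∈ Finset.range k, 2 * (3 + j : ℝ) / 4 ^ j * ε := by
    intro k
    induction k with
    | zero =>
      rintro - A (rfl | rfl | ⟨h, -⟩)
      · simp [hempty]
      · simp [huniv]
      · exact absurd rfl h
    | succ k ih =>
      rintro hk A (rfl | rfl | ⟨-, m, hm, rfl⟩)
      · rw [hempty, abs_zero]; positivity
      · rw [huniv, abs_zero]; positivity
      · rw [localDisc_eq_add_diff volume z (hl1 k m).measurableSet (hl2 k m),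
          Finset.sum_range_succ]
        exact (abs_add_le _ _).trans (add_le_add (ih (by omega) _ (hl1 k m))
          (hz ⟨k, m⟩ (Finset.mem_sigma.2 ⟨Finset.mem_range.2 hk, hm⟩)))
  refine ⟨z, fun A hA => (hchain K le_rfl A hA).trans ?_⟩
  rw [← Finset.sum_mul]
  exact mul_le_mul_of_nonneg_right (sum_chain_le K) hε0.le

theorem stmt_2 (s N : ℕ) (hs : 1 ≤ s) (hN : 1 ≤ N) :
    ∃ z : Fin N → (Fin s → ℝ), (∀ n, z n ∈ Set.Icc (0 : Fin s → ℝ) 1) ∧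
      starDiscrepancy s N z ≤ 13 * (Real.sqrt s / Real.sqrt N) := by
  have hε0 : 0 < √s / √N := by positivity
  have hex : ∃ K : ℕ, (1 : ℝ) / 16 ^ K ≤ 4 * (√s / √N) := by
    obtain ⟨K, hK⟩ := exists_pow_lt_of_lt_one (show 0 < 4 * (√s / √N) by positivity)
      (show (1 / 16 : ℝ) < 1 by norm_num)
    exact ⟨K, by rw [div_pow, one_pow] at hK; exact hK.le⟩
  classical
  obtain ⟨z, hz⟩ := exists_chain hs hN (Nat.find hex)
    fun k hk => (not_le.1 (Nat.find_min hex hk)).le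
  refine ⟨fun n i => z n i, fun n => ⟨fun i => (z n i).2.1, fun i => (z n i).2.2⟩, ?_⟩
  have : Nonempty (Set.Icc (0 : Fin s → ℝ) 1) := ⟨⟨0, le_rfl, zero_le_one⟩⟩
  refine ciSup_le fun ⟨x, hx0, hx1⟩ => ?_
  have hdisc : (Nat.card {n : Fin N // (fun i => (z n i : ℝ)) ∈ Set.Icc 0 x} : ℝ) / N - ∏ i, x i
      = localDisc volume z (box x) := by
    rw [localDisc, volume_real_box hx0 hx1, Nat.card_eq_fintype_card, Fintype.card_subtype,
      ← Finset.sum_boole]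
    congr 2
    refine Finset.sum_congr rfl fun n _ => ?_
    rw [Set.indicator_apply]
    refine if_congr ⟨fun h => h.2, fun h => ⟨fun i => (z n i).2.1, h⟩⟩ rfl rfl
  change |_| ≤ _
  rw [hdisc]
  obtain ⟨A, A', hA, hA', h1, h2, h3⟩ := exists_bracket hs (Nat.find hex) hx0 hx1
  have h4 := Nat.find_spec hex
  have h5 := abs_le.1 (hz A hA)
  have h6 := abs_le.1 (hz A' hA')
  have h7 := localDisc_le_add volume z h1
  have h8 := localDisc_le_add volume z h2
  have h9 := measureReal_mono (μ := volume) h1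
  have h10 := measureReal_mono (μ := volume) h2
  rw [abs_le]
  constructor <;> linarith
end

section
/- For every dimension s ≥ 1 and every δ ∈ (0,1] there exists a δ-cover Γ of [0,1]^s with |Γ| ≤ (2e)^s · (δ^{−1} + 1)^s; that is, the minimal cardinality 𝒩(s,δ) of a δ-cover of [0,1]^s satisfies 𝒩(s,δ) ≤ (2e)^s (δ^{−1} + 1)^s. -/
/-!
Put `m = ⌈s/δ⌉`. For integers `m ≥ j₁ ≥ j₂ ≥ … ≥ jₛ ≥ 1` consider the box with upper corner
`z = (j₁/m, j₂/j₁, …, jₛ/jₛ₋₁)` and lower corner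
`x = ((j₁-1)/m, (j₂-1)/j₁, …, (jₛ-1)/jₛ₋₁)`. Choosing `jᵢ` greedily as `max 1 ⌈jᵢ₋₁ yᵢ⌉` shows that
these boxes cover the cube, and the two corner volumes differ by at most `s/m ≤ δ`. The number of
boxes is the number of multisets of size `s` in an `m`-element set, so the corners form a `δ`-cover
of size at most `2 * multichoose m s ≤ 2 * (m + s - 1)^s / s! ≤ 2 * (s^s / s!) * (δ⁻¹ + 1)^s`, and
`s^s / s! ≤ e^s`.

The family of boxes is built in `exists_brackets` by recursion on the dimension, splitting off the
first coordinate; the count follows from the hockey-stick identity `sum_multichoose`.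
-/

open Real

/-- `Γ` is a `δ`-cover of `[0,1]^s`: a finite set of points of `[0,1]^s` such that every
`y ∈ [0,1]^s` is bracketed by points `x ≤ y ≤ z` of `Γ ∪ {0}` with
`λ([0,z)) - λ([0,x)) = ∏ zᵢ - ∏ xᵢ ≤ δ`. -/
def IsDeltaCover (s : ℕ) (δ : ℝ) (Γ : Finset (Fin s → ℝ)) : Prop :=
  (∀ p ∈ Γ, p ∈ Set.Icc (0 : Fin s → ℝ) 1) ∧
  ∀ y ∈ Set.Icc (0 : Fin s → ℝ) 1, ∃ x z : Fin s → ℝ,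
    (x ∈ Γ ∨ x = 0) ∧ (z ∈ Γ ∨ z = 0) ∧ x ≤ y ∧ y ≤ z ∧
    (∏ i, z i) - (∏ i, x i) ≤ δ

/-- Hockey-stick identity for multiset coefficients. -/
lemma sum_multichoose (s m : ℕ) :
    ∑ j ∈ Finset.Icc 1 m, Nat.multichoose j s = Nat.multichoose m (s + 1) := by
  induction m with
  | zero => simp
  | succ m ih =>
    rw [Finset.sum_Icc_succ_top (by omega), ih, Nat.multichoose_succ_succ]

/-- One coordinate step of the covering: `t ∈ [0,1]` lies in a cell `[(j-1)/m, j/m]`. -/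
lemma exists_cell (m : ℕ) (hm : 1 ≤ m) (t : ℝ) (h0 : 0 ≤ t) (h1 : t ≤ 1) :
    ∃ j ∈ Finset.Icc 1 m, ((j : ℝ) - 1) / m ≤ t ∧ t ≤ (j : ℝ) / m := by
  have hm' : (0 : ℝ) < m := by exact_mod_cast hm
  -- the maximum only matters for `t = 0`, where the ceiling vanishes
  refine ⟨max 1 ⌈t * m⌉₊, ?_, ?_, ?_⟩
  · rw [Finset.mem_Icc]
    refine ⟨le_max_left _ _, max_le hm (Nat.ceil_le.2 ?_)⟩
    nlinarith
  · rw [div_le_iff₀ hm', Nat.cast_max]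
    have hc := Nat.ceil_lt_add_one (mul_nonneg h0 hm'.le)
    have : max ((1 : ℕ) : ℝ) (⌈t * m⌉₊ : ℝ) ≤ t * m + 1 :=
      max_le (by push_cast; nlinarith [mul_nonneg h0 hm'.le]) hc.le
    linarith
  · rw [le_div_iff₀ hm', Nat.cast_max]
    exact (Nat.le_ceil _).trans (le_max_right _ _)

/-- A family of at most `multichoose m s` boxes covering `[0,1]^s`, each with corner volumes
differing by at most `s / m`. A box is stored as the pair (lower corner, upper corner). -/
lemma exists_brackets (s : ℕ) : ∀ m : ℕ, 1 ≤ m →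
    ∃ B : Finset ((Fin s → ℝ) × (Fin s → ℝ)), B.card ≤ Nat.multichoose m s ∧
      (∀ p ∈ B, p.1 ∈ Set.Icc (0 : Fin s → ℝ) 1 ∧ p.2 ∈ Set.Icc (0 : Fin s → ℝ) 1 ∧
        (∏ i, p.2 i) - (∏ i, p.1 i) ≤ s / m) ∧
      ∀ y ∈ Set.Icc (0 : Fin s → ℝ) 1, ∃ p ∈ B, p.1 ≤ y ∧ y ≤ p.2 := by
  classical
  induction s with
  | zero =>
    intro m _
    refine ⟨{(0, 0)}, by simp, ?_, ?_⟩
    · intro p _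
      exact ⟨⟨fun i => i.elim0, fun i => i.elim0⟩, ⟨fun i => i.elim0, fun i => i.elim0⟩, by simp⟩
    · intro y _
      exact ⟨(0, 0), by simp, fun i => i.elim0, fun i => i.elim0⟩
  | succ s ih =>
    intro m hm
    choose! B hcard hB hcov using ih
    have hm' : (0 : ℝ) < m := by exact_mod_cast hm
    -- over the cell `[(j-1)/m, j/m]` of the first coordinate, use the family with parameter `j`
    refine ⟨(Finset.Icc 1 m).biUnion fun j => (B j).image fun p =>
      (Fin.cons (((j : ℝ) - 1) / m) p.1, Fin.cons ((j : ℝ) / m) p.2), ?_, ?_, ?_⟩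
    · rw [← sum_multichoose]
      refine Finset.card_biUnion_le.trans (Finset.sum_le_sum fun j hj => ?_)
      exact Finset.card_image_le.trans (hcard j (Finset.mem_Icc.1 hj).1)
    · intro p hp
      simp only [Finset.mem_biUnion, Finset.mem_image] at hp
      obtain ⟨j, hj, q, hq, rfl⟩ := hp
      obtain ⟨hj1, hjm⟩ := Finset.mem_Icc.1 hj
      have hj1' : (1 : ℝ) ≤ j := by exact_mod_cast hj1
      have hjm' : (j : ℝ) ≤ m := by exact_mod_cast hjm
      obtain ⟨hx, hz, hv⟩ := hB j hj1 q hq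
      have hx1 : ∏ i, q.1 i ≤ 1 := Finset.prod_le_one (fun i _ => hx.1 i) fun i _ => hx.2 i
      refine ⟨⟨fun i => ?_, fun i => ?_⟩, ⟨fun i => ?_, fun i => ?_⟩, ?_⟩
      · refine Fin.cases ?_ (fun i => ?_) i
        · exact div_nonneg (by linarith) hm'.le
        · exact hx.1 i
      · refine Fin.cases ?_ (fun i => ?_) i
        · exact (div_le_one hm').2 (by linarith)
        · exact hx.2 i
      · refine Fin.cases ?_ (fun i => ?_) i
        · exact div_nonneg (by linarith) hm'.le
        · exact hz.1 i
      · refine Fin.cases ?_ (fun i => ?_) i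
        · exact (div_le_one hm').2 (by linarith)
        · exact hz.2 i
      · simp only [Fin.prod_univ_succ, Fin.cons_zero, Fin.cons_succ]
        rw [le_div_iff₀ (by linarith)] at hv
        rw [le_div_iff₀ hm']
        have : ((j : ℝ) / m * ∏ i, q.2 i - ((j : ℝ) - 1) / m * ∏ i, q.1 i) * m
            = ((∏ i, q.2 i) - ∏ i, q.1 i) * j + ∏ i, q.1 i := by
          field_simp
          ring
        rw [this]
        push_cast
        linarith
    · intro y hy
      obtain ⟨j, hj, hl, hu⟩ := exists_cell m hm (y 0) (hy.1 0) (hy.2 0)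
      obtain ⟨q, hq, hql, hqu⟩ := hcov j (Finset.mem_Icc.1 hj).1 (Fin.tail y)
        ⟨fun i => hy.1 i.succ, fun i => hy.2 i.succ⟩
      refine ⟨_, Finset.mem_biUnion.2 ⟨j, hj, Finset.mem_image_of_mem _ hq⟩,
        fun i => ?_, fun i => ?_⟩
      · exact Fin.cases hl (fun i => hql i) i
      · exact Fin.cases hu (fun i => hqu i) i

theorem stmt_4 (s : ℕ) (hs : 1 ≤ s) (δ : ℝ) (hδ : δ ∈ Set.Ioc (0:ℝ) 1) :
    ∃ Γ : Finset (Fin s → ℝ), IsDeltaCover s δ Γ ∧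
      (Γ.card : ℝ) ≤ (2 * Real.exp 1) ^ s * (δ⁻¹ + 1) ^ s := by
  classical
  obtain ⟨hδ0, -⟩ := hδ
  have hs' : (0 : ℝ) < s := by exact_mod_cast hs
  have hq : 0 < (s : ℝ) / δ := div_pos hs' hδ0
  obtain ⟨m, hmdef⟩ : ∃ m, m = ⌈(s : ℝ) / δ⌉₊ := ⟨_, rfl⟩
  have hm : 1 ≤ m := by rw [hmdef]; exact Nat.ceil_pos.2 hq
  have hm' : (0 : ℝ) < m := by exact_mod_cast hm
  have hle : (s : ℝ) / δ ≤ m := by rw [hmdef]; exact Nat.le_ceil _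
  have hlt : (m : ℝ) < s / δ + 1 := by rw [hmdef]; exact Nat.ceil_lt_add_one hq.le
  obtain ⟨B, hcard, hB, hcov⟩ := exists_brackets s m hm
  refine ⟨B.image Prod.fst ∪ B.image Prod.snd, ⟨?_, ?_⟩, ?_⟩
  · intro p hp
    rcases Finset.mem_union.1 hp with hp | hp
    · obtain ⟨q, hq, rfl⟩ := Finset.mem_image.1 hp
      exact (hB q hq).1
    · obtain ⟨q, hq, rfl⟩ := Finset.mem_image.1 hp
      exact (hB q hq).2.1
  · intro y hy
    obtain ⟨p, hp, hl, hu⟩ := hcov y hy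
    refine ⟨p.1, p.2, Or.inl (Finset.mem_union_left _ (Finset.mem_image_of_mem _ hp)),
      Or.inl (Finset.mem_union_right _ (Finset.mem_image_of_mem _ hp)), hl, hu,
      (hB p hp).2.2.trans ?_⟩
    rw [div_le_iff₀ hm']
    rw [div_le_iff₀ hδ0] at hle
    linarith
  · have h1 : (B.image Prod.fst ∪ B.image Prod.snd).card ≤ 2 * Nat.multichoose m s := by
      have := Finset.card_union_le (B.image Prod.fst) (B.image Prod.snd)
      have h2 := Finset.card_image_le (s := B) (f := Prod.fst)
      have h3 := Finset.card_image_le (s := B) (f := Prod.snd)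
      omega
    have h2 : (Nat.multichoose m s : ℝ) ≤ ((m + s - 1 : ℕ) : ℝ) ^ s / (s.factorial : ℝ) := by
      rw [Nat.multichoose_eq]
      exact Nat.choose_le_pow_div s (m + s - 1)
    have h3 : ((m + s - 1 : ℕ) : ℝ) ≤ s * (δ⁻¹ + 1) := by
      rw [Nat.cast_sub (by omega)]
      push_cast
      rw [div_eq_mul_inv] at hlt
      linarith
    have hd : 0 < δ⁻¹ + 1 := by positivity
    have h4 : (s : ℝ) ^ s / (s.factorial : ℝ) ≤ Real.exp 1 ^ s := by
      rw [← Real.exp_nat_mul, mul_one]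
      exact Real.pow_div_factorial_le_exp _ hs'.le s
    have h5 : (2 : ℝ) ≤ 2 ^ s := le_self_pow₀ (by norm_num) (by omega)
    calc ((B.image Prod.fst ∪ B.image Prod.snd).card : ℝ)
        ≤ 2 * (Nat.multichoose m s : ℝ) := by exact_mod_cast h1
      _ ≤ 2 * ((s * (δ⁻¹ + 1)) ^ s / (s.factorial : ℝ)) := by
          refine mul_le_mul_of_nonneg_left (h2.trans ?_) (by norm_num)
          gcongr
      _ = 2 * ((s : ℝ) ^ s / (s.factorial : ℝ)) * (δ⁻¹ + 1) ^ s := by rw [mul_pow]; ring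
      _ ≤ 2 ^ s * Real.exp 1 ^ s * (δ⁻¹ + 1) ^ s := by gcongr
      _ = (2 * Real.exp 1) ^ s * (δ⁻¹ + 1) ^ s := by rw [mul_pow]
end

section
/- For every dimension s ≥ 1 and every δ ∈ (0,1] there exists a δ-bracketing cover Δ of [0,1]^s with |Δ| ≤ 2^{s−1} · e^s · (δ^{−1} + 1)^s; that is, the minimal cardinality 𝒩_{[ ]}(s,δ) of a δ-bracketing cover of [0,1]^s satisfies 𝒩_{[ ]}(s,δ) ≤ 2^{s−1} e^s (δ^{−1} + 1)^s. -/
/-!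
The cover is built by induction on the dimension, cutting the first coordinate into equal steps.

With the rescaled parameter `u = s / δ`, the weight condition reads `u * (∏ zᵢ - ∏ xᵢ) ≤ s`, and the
claim is that a cover with at most `(u + s) ^ s / s!` pairs exists (`exists_scaled_cover`).
In dimension `n + 1`, put `a j = max 0 (1 - j / u)` and, for every `j < ⌈u⌉`, pair the slab
`[a (j + 1), a j]` with an `n`-dimensional cover for the parameter `u * a j = u - j`. Since
`a j * ∏ z - a (j + 1) * ∏ x = a j * (∏ z - ∏ x) + (a j - a (j + 1)) * ∏ x`,
the scaled weights are at most `n + 1`. The number of pairs is at most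
`∑ j < ⌈u⌉, (u - j + n) ^ n / n!`, which is at most `(u + n + 1) ^ (n + 1) / (n + 1)!` by
telescoping (`sum_pow_le`, a Riemann sum compared with its integral).

For `u = s / δ` the count is `s ^ s / s! * (δ⁻¹ + 1) ^ s`, and `s ^ s / s! ≤ exp s`.
-/

open Real

/-- `Δ` is a `δ`-bracketing cover of `[0,1]^s`: a finite set of pairs `(x,z)` of points of
`[0,1]^s` with `x ≤ z` and `λ([0,z)) - λ([0,x)) = ∏ zᵢ - ∏ xᵢ ≤ δ`, such that every
`y ∈ [0,1]^s` satisfies `x ≤ y ≤ z` for some pair `(x,z) ∈ Δ`. -/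
def IsDeltaBracketingCover (s : ℕ) (δ : ℝ) (Δ : Finset ((Fin s → ℝ) × (Fin s → ℝ))) : Prop :=
  (∀ p ∈ Δ, p.1 ∈ Set.Icc (0 : Fin s → ℝ) 1 ∧ p.2 ∈ Set.Icc (0 : Fin s → ℝ) 1 ∧
    p.1 ≤ p.2 ∧ (∏ i, p.2 i) - (∏ i, p.1 i) ≤ δ) ∧
  ∀ y ∈ Set.Icc (0 : Fin s → ℝ) 1, ∃ p ∈ Δ, p.1 ≤ y ∧ y ≤ p.2

/-- The increment of `t ^ (n + 1)` over `[x, x + 1]` is at least the smallest value of its derivative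
there, which is attained at `x`. -/
lemma succ_mul_pow_le (n : ℕ) (x : ℝ) (hx : 0 ≤ x) :
    (n + 1) * x ^ n ≤ (x + 1) ^ (n + 1) - x ^ (n + 1) := by
  induction n with
  | zero => simp
  | succ n ih =>
    have h1 : x * ((n + 1) * x ^ n) ≤ x * ((x + 1) ^ (n + 1) - x ^ (n + 1)) :=
      mul_le_mul_of_nonneg_left ih hx
    have h2 : x ^ (n + 1) ≤ (x + 1) ^ (n + 1) := by gcongr; linarith
    push_cast
    have e1 : (x + 1) ^ (n + 1 + 1) = x * (x + 1) ^ (n + 1) + (x + 1) ^ (n + 1) := by ring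
    have e2 : x ^ (n + 1 + 1) = x * x ^ (n + 1) := by ring
    have e3 : x ^ (n + 1) = x * x ^ n := by ring
    rw [e1, e2]
    nlinarith

lemma sum_pow_le (n J : ℕ) (u : ℝ) (hJ : (J : ℝ) ≤ u + 1) :
    ∑ j ∈ Finset.range J, (n + 1) * (u - j + n) ^ n
      ≤ (u + n + 1) ^ (n + 1) - (u + n + 1 - J) ^ (n + 1) := by
  induction J with
  | zero => simp
  | succ J ih =>
    push_cast at hJ
    rw [Finset.sum_range_succ]
    have h1 := ih (by linarith)
    have h2 := succ_mul_pow_le n (u - J + n) (by have : (0 : ℝ) ≤ n := n.cast_nonneg; linarith)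
    have e1 : u - J + n + 1 = u + n + 1 - J := by ring
    have e2 : u - J + n = u + n + 1 - (J + 1 : ℕ) := by push_cast; ring
    rw [e1] at h2
    rw [← e2]
    linarith

/-- The inductive construction, in terms of `u = s / δ`. -/
lemma exists_scaled_cover (n : ℕ) : ∀ u : ℝ, 0 < u →
    ∃ Δ : Finset ((Fin n → ℝ) × (Fin n → ℝ)), IsDeltaBracketingCover n (n / u) Δ ∧
      (Δ.card : ℝ) ≤ (u + n) ^ n / n.factorial := by
  classical
  induction n with
  | zero =>
    intro u hu
    refine ⟨{(0, 0)}, ⟨?_, ?_⟩, by simp⟩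
    · intro p hp
      rw [Finset.mem_singleton] at hp
      subst hp
      simp
    · intro y _
      exact ⟨_, Finset.mem_singleton_self _, fun i => i.elim0, fun i => i.elim0⟩
  | succ n ih =>
    intro u hu
    set a : ℕ → ℝ := fun j => max 0 (1 - j / u) with ha
    have hJ0 : 0 < ⌈u⌉₊ := Nat.ceil_pos.mpr hu
    have hex : ∀ j : ℕ, ∃ Δ : Finset ((Fin n → ℝ) × (Fin n → ℝ)), j < ⌈u⌉₊ →
        IsDeltaBracketingCover n (n / (u - j)) Δ ∧
        (Δ.card : ℝ) ≤ (u - j + n) ^ n / n.factorial := by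
      intro j
      by_cases hj : j < ⌈u⌉₊
      · obtain ⟨D, hD⟩ := ih (u - j) (sub_pos.mpr (Nat.lt_ceil.mp hj))
        exact ⟨D, fun _ => hD⟩
      · exact ⟨∅, fun h => absurd h hj⟩
    choose D hD using hex
    have ha0 : ∀ j, 0 ≤ a j := fun j => le_max_left _ _
    have ha1 : ∀ j, a j ≤ 1 := fun j =>
      max_le zero_le_one (by have : (0 : ℝ) ≤ j / u := by positivity
                             linarith)
    have hanti : ∀ j, a (j + 1) ≤ a j := by
      intro j
      apply max_le_max le_rfl
      have : (j : ℝ) / u ≤ ((j + 1 : ℕ) : ℝ) / u := by gcongr; simp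
      linarith
    have hstep : ∀ j, a j - a (j + 1) ≤ 1 / u := by
      intro j
      have h1 : 1 - ((j + 1 : ℕ) : ℝ) / u ≤ a (j + 1) := le_max_right _ _
      have h2 : ((j + 1 : ℕ) : ℝ) / u = j / u + 1 / u := by push_cast; ring
      have h3 : 0 ≤ 1 / u := by positivity
      have h4 : a j ≤ a (j + 1) + 1 / u := max_le (by linarith [ha0 (j + 1)]) (by linarith)
      linarith
    refine ⟨(Finset.range ⌈u⌉₊).biUnion fun j => (D j).image fun p =>
      ((Fin.cons (a (j + 1)) p.1 : Fin (n + 1) → ℝ), (Fin.cons (a j) p.2 : Fin (n + 1) → ℝ)),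
      ⟨?_, ?_⟩, ?_⟩
    · intro p hp
      simp only [Finset.mem_biUnion, Finset.mem_range, Finset.mem_image] at hp
      obtain ⟨j, hj, ⟨x, z⟩, hq, rfl⟩ := hp
      obtain ⟨⟨hx0, hx1⟩, ⟨hz0, hz1⟩, hxz, hw⟩ := (hD j hj).1.1 _ hq
      have hju : (j : ℝ) < u := Nat.lt_ceil.mp hj
      simp only at hx0 hx1 hz0 hz1 hxz hw
      refine ⟨⟨?_, ?_⟩, ⟨?_, ?_⟩, ?_, ?_⟩
      · exact fun i => Fin.cases (ha0 _) (fun i => hx0 i) i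
      · exact fun i => Fin.cases (ha1 _) (fun i => hx1 i) i
      · exact fun i => Fin.cases (ha0 _) (fun i => hz0 i) i
      · exact fun i => Fin.cases (ha1 _) (fun i => hz1 i) i
      · exact fun i => Fin.cases (hanti _) (fun i => hxz i) i
      · simp only [Fin.prod_univ_succ, Fin.cons_zero, Fin.cons_succ]
        have hP1 : ∏ i, x i ≤ 1 := Finset.prod_le_one (fun i _ => hx0 i) (fun i _ => hx1 i)
        have haj : a j = (u - j) / u := by
          rw [sub_div, div_self hu.ne']
          exact max_eq_right (sub_nonneg.mpr ((div_le_one hu).mpr hju.le))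
        have h1 : a j * (∏ i, z i - ∏ i, x i) ≤ n / u := by
          calc _ ≤ a j * (n / (u - j)) := mul_le_mul_of_nonneg_left hw (ha0 j)
            _ = n / u := by
              rw [haj]
              have : u - j ≠ 0 := (sub_pos.mpr hju).ne'
              field_simp
        have h2 : (a j - a (j + 1)) * ∏ i, x i ≤ 1 / u :=
          (mul_le_of_le_one_right (sub_nonneg.mpr (hanti j)) hP1).trans (hstep j)
        have h3 : ((n + 1 : ℕ) : ℝ) / u = n / u + 1 / u := by push_cast; ring
        rw [h3]
        linarith
    · intro y hy
      obtain ⟨hy0, hy1⟩ := hy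
      have hw0 : 0 ≤ u * (1 - y 0) := mul_nonneg hu.le (sub_nonneg.mpr (hy1 0))
      -- The minimum only matters when `y 0 = 0` and `u` is an integer.
      obtain ⟨j, hj, hlo, hhi⟩ : ∃ j < ⌈u⌉₊, a (j + 1) ≤ y 0 ∧ y 0 ≤ a j := by
        refine ⟨min ⌊u * (1 - y 0)⌋₊ (⌈u⌉₊ - 1), by omega, ?_, ?_⟩
        · apply max_le (hy0 0)
          rw [sub_le_comm, le_div_iff₀ hu, mul_comm]
          rcases le_total ⌊u * (1 - y 0)⌋₊ (⌈u⌉₊ - 1) with h | h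
          · rw [min_eq_left h]
            push_cast
            exact (Nat.lt_floor_add_one _).le
          · rw [min_eq_right h, Nat.sub_add_cancel hJ0]
            have h0 : 0 ≤ y 0 := hy0 0
            exact (mul_le_of_le_one_right hu.le (by linarith)).trans (Nat.le_ceil u)
        · apply le_max_of_le_right
          rw [le_sub_comm, div_le_iff₀ hu, mul_comm (1 - y 0) u]
          exact le_trans (by exact_mod_cast min_le_left _ _) (Nat.floor_le hw0)
      obtain ⟨p, hp, hp1, hp2⟩ := (hD j hj).1.2 (fun i => y i.succ)
        ⟨fun i => hy0 i.succ, fun i => hy1 i.succ⟩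
      refine ⟨_, Finset.mem_biUnion.mpr ⟨j, Finset.mem_range.mpr hj,
        Finset.mem_image_of_mem _ hp⟩, ?_, ?_⟩
      · exact fun i => Fin.cases hlo (fun i => hp1 i) i
      · exact fun i => Fin.cases hhi (fun i => hp2 i) i
    · have hJu : (⌈u⌉₊ : ℝ) ≤ u + 1 := (Nat.ceil_lt_add_one hu.le).le
      have hF : (0 : ℝ) < n.factorial := by exact_mod_cast n.factorial_pos
      have hc : ((((Finset.range ⌈u⌉₊).biUnion fun j => (D j).image fun p =>
          ((Fin.cons (a (j + 1)) p.1 : Fin (n + 1) → ℝ),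
            (Fin.cons (a j) p.2 : Fin (n + 1) → ℝ))).card : ℕ) : ℝ)
          ≤ ∑ j ∈ Finset.range ⌈u⌉₊, (u - j + n) ^ n / n.factorial := by
        refine (Nat.cast_le.mpr Finset.card_biUnion_le).trans ?_
        push_cast
        refine Finset.sum_le_sum fun j hj => ?_
        exact (Nat.cast_le.mpr Finset.card_image_le).trans (hD j (Finset.mem_range.mp hj)).2
      refine hc.trans ?_
      have hs := sum_pow_le n ⌈u⌉₊ u hJu
      have hpos : 0 ≤ (u + n + 1 - ⌈u⌉₊) ^ (n + 1) := by
        have : (0 : ℝ) ≤ n := n.cast_nonneg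
        exact pow_nonneg (by linarith) _
      rw [← Finset.mul_sum] at hs
      rw [← Finset.sum_div, Nat.factorial_succ]
      push_cast
      rw [div_le_div_iff₀ hF (by positivity), ← add_assoc]
      nlinarith

theorem stmt_5 (s : ℕ) (hs : 1 ≤ s) (δ : ℝ) (hδ : δ ∈ Set.Ioc (0:ℝ) 1) :
    ∃ Δ : Finset ((Fin s → ℝ) × (Fin s → ℝ)), IsDeltaBracketingCover s δ Δ ∧
      (Δ.card : ℝ) ≤ 2 ^ (s - 1) * Real.exp 1 ^ s * (δ⁻¹ + 1) ^ s := by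
  have hs0 : (0 : ℝ) < s := by exact_mod_cast hs
  have hδ0 : 0 < δ := hδ.1
  obtain ⟨D, hD, hc⟩ := exists_scaled_cover s (s / δ) (by positivity)
  have e : (s : ℝ) / (s / δ) = δ := by field_simp
  rw [e] at hD
  refine ⟨D, hD, hc.trans ?_⟩
  have h1 : (s : ℝ) ^ s / s.factorial ≤ Real.exp 1 ^ s := by
    rw [← Real.exp_nat_mul, mul_one]
    exact Real.pow_div_factorial_le_exp _ hs0.le _
  have h2 : (1 : ℝ) ≤ 2 ^ (s - 1) := one_le_pow₀ one_le_two
  calc ((s : ℝ) / δ + s) ^ s / s.factorial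
      = (s : ℝ) ^ s / s.factorial * (δ⁻¹ + 1) ^ s := by
        rw [show (s : ℝ) / δ + s = s * (δ⁻¹ + 1) by ring, mul_pow]; ring
    _ ≤ Real.exp 1 ^ s * (δ⁻¹ + 1) ^ s := by gcongr
    _ ≤ 2 ^ (s - 1) * Real.exp 1 ^ s * (δ⁻¹ + 1) ^ s := by
        gcongr
        exact le_mul_of_one_le_left (by positivity) h2
end
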